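/- Let m > n ≥ 1. The following are equivalent for a local K-algebra A: (a) A is an Artinian Gorenstein local ring with Hilbert function {1,m,n,1}; (b) A is isomorphic as a K-algebra to A_F, where F = F_3 + y_{n+1}^2 + ⋯ + y_m^2 ∈ K[y_1,…,y_m] and F_3 is a non-degenerate homogeneous form of degree three in the variables y_1,…,y_n. -/

import Mathlib

/-- The contraction (derivative) action of the power series ring
`R = K[[x_1,…,x_n]]` on the polynomial ring `P = K[y_1,…,y_n]`:
`f ∘ g = f(∂/∂y_1, …, ∂/∂y_n)(g)`.  It is defined on the monomial basis by
`x^α ∘ y^β = (∏ i, (β i)!/(β i - α i)!) y^(β-α)` (zero unless `α ≤ β`), the honest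
iterated partial derivative, and extended `K`-linearly. -/
noncomputable def contract {K : Type*} [Field K] {n : ℕ} (f : MvPowerSeries (Fin n) K) :
    MvPolynomial (Fin n) K →ₗ[K] MvPolynomial (Fin n) K :=
  (MvPolynomial.basisMonomials (Fin n) K).constr K fun β =>
    ∑ α ∈ Finset.Iic β,
      (MvPowerSeries.coeff α f * ∏ i, ((β i).descFactorial (α i) : K)) •
        MvPolynomial.monomial (β - α) (1 : K)

theorem contract_add {K : Type*} [Field K] {n : ℕ} (f g : MvPowerSeries (Fin n) K) :
    contract (f + g) = contract f + contract g := by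
  unfold contract
  rw [← map_add]
  congr 1
  funext β
  simp only [Pi.add_apply]
  rw [← Finset.sum_add_distrib]
  exact Finset.sum_congr rfl fun α _ => by rw [map_add, add_mul, add_smul]

theorem contract_zero {K : Type*} [Field K] {n : ℕ} :
    contract (0 : MvPowerSeries (Fin n) K) = 0 := by
  unfold contract
  convert map_zero ((MvPolynomial.basisMonomials (Fin n) K).constr
    (M' := MvPolynomial (Fin n) K) K) using 2
  funext β
  simp

/-- The annihilator `Ann_R(F) = Ann_R(⟨F⟩_R)` of (the cyclic `R`-submodule of
`P` generated by) a polynomial `F` under the contraction action; an ideal of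
`R = K[[x_1,…,x_n]]`.  The Artinian Gorenstein local algebra associated to `F`
is `A_F = R ⧸ annR F`. -/
noncomputable def annR {K : Type*} [Field K] {n : ℕ} (F : MvPolynomial (Fin n) K) :
    Ideal (MvPowerSeries (Fin n) K) where
  carrier := {f | ∀ u : MvPowerSeries (Fin n) K, contract (u * f) F = 0}
  zero_mem' := fun u => by rw [mul_zero, contract_zero]; rfl
  add_mem' := fun {a b} ha hb u => by
    rw [mul_add, contract_add, LinearMap.add_apply, ha u, hb u, add_zero]
  smul_mem' := fun c f hf u => by
    rw [smul_eq_mul, ← mul_assoc]; exact hf (u * c)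

/-- The linear form `l 1 • x_1 + ⋯ + l n • x_n` in `R = K[[x_1,…,x_n]]`. -/
noncomputable def linForm {K : Type*} [Field K] {n : ℕ} (l : Fin n → K) :
    MvPowerSeries (Fin n) K :=
  ∑ i, MvPowerSeries.monomial (Finsupp.single i 1) (l i)

/-- A polynomial `F ∈ K[y_1,…,y_n]` is non-degenerate if `Ann_R(F)` contains no
nonzero linear form; equivalently, the embedding dimension of `A_F` is `n`,
i.e. `HF_{A_F}(1) = n`. -/
def nondegenerate {K : Type*} [Field K] {n : ℕ} (F : MvPolynomial (Fin n) K) : Prop :=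
  ∀ l : Fin n → K, linForm l ∈ annR F → l = 0

/-- The Hilbert function
`HF_A(i) = dim_K (m^i/m^(i+1)) = dim_K A/m^(i+1) - dim_K A/m^i`
of a local `K`-algebra `A` with maximal ideal `m`. -/
noncomputable def hilbLoc (K : Type*) [Field K] (A : Type*) [CommRing A] [IsLocalRing A]
    [Algebra K A] (i : ℕ) : ℕ :=
  Module.finrank K (A ⧸ (IsLocalRing.maximalIdeal A ^ (i + 1))) -
    Module.finrank K (A ⧸ (IsLocalRing.maximalIdeal A ^ i))

/-- `dim_K` of the socle `(0 : m)` of a local `K`-algebra `A`;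
an Artinian local ring `A` is Gorenstein iff this equals `1`. -/
noncomputable def socDimLoc (K : Type*) [Field K] (A : Type*) [CommRing A] [IsLocalRing A]
    [Algebra K A] : ℕ :=
  Module.finrank K
    ((Submodule.colon (⊥ : Ideal A) (IsLocalRing.maximalIdeal A)).restrictScalars K)

/-- The residue field of the local `K`-algebra `A` is `K` itself,
via the structure map. -/
def residueFieldIsK (K : Type*) [Field K] (A : Type*) [CommRing A] [IsLocalRing A]
    [Algebra K A] : Prop :=
  Function.Bijective (algebraMap K (IsLocalRing.ResidueField A))

/-! For a Gorenstein local algebra `A` with dual socle generator `φ`, everything is governed by the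
nondegenerate form `(a, b) ↦ φ (a * b)`. Let `HF_A = {1, m, n, 1}` with maximal ideal `M`, and
normalise `φ 1 = 0`. On `M ∩ ker φ`, of dimension `m + n`, the form stays nondegenerate, and
`M² ∩ ker φ` is an isotropic subspace of dimension `n` because `M⁴ = 0`. Witt's theorem
complements it by `n` isotropic vectors `t` dual to it and `m - n` orthogonal vectors `z` of
square `2`. The `t` and `z` generate `A`, each `z` is orthogonal to `M²` and hence annihilates it,
and the values of `φ` on monomials in `t`, `z` are, up to factorials, the coefficients of
Macaulay's inverse system `F₃ + y_{n+1}² + ⋯ + y_m²`. The linear forms annihilating `F₃` are the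
combinations of `t` annihilating `M²`, of which only `0` exists by duality. Conversely, such
generators and `φ` determine the dimensions of `M`, `M²`, `M³` and of the socle. -/

section BilinearForms

open LinearMap (BilinForm IsSymm)
open Module (finrank)

variable {K V : Type*} [Field K] [AddCommGroup V] [Module K V]

theorem finrank_sup_of_linearIndependent_mod {ι : Type*} [Fintype ι] [FiniteDimensional K V]
    (v : ι → V) (N : Submodule K V) (hv : ∀ c : ι → K, ∑ i, c i • v i ∈ N → c = 0) :
    finrank K ↥(Submodule.span K (Set.range v) ⊔ N) = Fintype.card ι + finrank K N := by
  have hli : LinearIndependent K v :=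
    Fintype.linearIndependent_iff.2 fun c hc => congrFun (hv c (hc ▸ N.zero_mem))
  have hdisj : Submodule.span K (Set.range v) ⊓ N = ⊥ := by
    refine (Submodule.eq_bot_iff _).2 fun x ⟨hx, hxN⟩ => ?_
    obtain ⟨c, rfl⟩ := (Submodule.mem_span_range_iff_exists_fun K).1 hx
    simp [hv c hxN]
  have hdim := Submodule.finrank_sup_add_finrank_inf_eq (Submodule.span K (Set.range v)) N
  rwa [hdisj, finrank_bot, add_zero, finrank_span_eq_card hli] at hdim

theorem finrank_inf_ker_add_one [FiniteDimensional K V] {N : Submodule K V} {f : V →ₗ[K] K} {v : V}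
    (hv : v ∈ N) (hf : f v ≠ 0) : finrank K ↥(N ⊓ LinearMap.ker f) + 1 = finrank K N := by
  have hne : f.domRestrict N ≠ 0 := fun h => hf (LinearMap.congr_fun h ⟨v, hv⟩)
  rw [← Module.Dual.finrank_ker_add_one_of_ne_zero hne, Nat.add_right_cancel_iff,
    LinearMap.ker_domRestrict, ← Submodule.finrank_map_subtype_eq, Submodule.map_comap_subtype]

theorem exists_dual_family {ι : Type*} [DecidableEq ι] [FiniteDimensional K V] {B : BilinForm K V}
    (hsymm : IsSymm B) (hB : B.Nondegenerate) {e : ι → V} (he : LinearIndependent K e) :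
    ∃ v : ι → V, ∀ i j, B (e i) (v j) = if i = j then 1 else 0 := by
  choose f hf using fun j => ((Module.Basis.span he).coord j).exists_extend
  refine ⟨fun j => (B.toDual hB).symm (f j), fun i j => ?_⟩
  have hij := LinearMap.congr_fun (hf j) (Module.Basis.span he i)
  rw [LinearMap.comp_apply, Submodule.subtype_apply, Module.Basis.coe_span_apply,
    Module.Basis.coord_apply, Module.Basis.repr_self, Finsupp.single_apply] at hij
  rw [← hsymm.eq, RingHom.id_apply, BilinForm.apply_toDual_symm_apply, hij]

/-- Correcting a dual family `v` by `-½ B (v j) (v i) e i` makes it isotropic without disturbing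
duality, because `e` is isotropic. -/
theorem exists_isotropic_dual_family {ι : Type*} [Finite ι] [DecidableEq ι]
    [FiniteDimensional K V] [NeZero (2 : K)] {B : BilinForm K V} (hsymm : IsSymm B)
    (hB : B.Nondegenerate) {e : ι → V} (he : LinearIndependent K e)
    (hee : ∀ i j, B (e i) (e j) = 0) :
    ∃ t : ι → V, (∀ i j, B (e i) (t j) = if i = j then 1 else 0) ∧ ∀ i j, B (t i) (t j) = 0 := by
  have := Fintype.ofFinite ι
  obtain ⟨v, hv⟩ := exists_dual_family hsymm hB he
  have hv' (i j) : B (v i) (e j) = if i = j then 1 else 0 := by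
    rw [← hsymm.eq, RingHom.id_apply, hv]; simp only [eq_comm]
  refine ⟨fun j => v j - ∑ i, (2⁻¹ * B (v j) (v i)) • e i, fun i j => ?_, fun i j => ?_⟩
  · simp [hv, hee]
  · have hij : B (v j) (v i) = B (v i) (v j) := hsymm.eq _ _
    simp only [map_sub, map_sum, map_smul, LinearMap.sub_apply, LinearMap.sum_apply,
      LinearMap.smul_apply, smul_eq_mul, hv, hv', hee, mul_ite, mul_one, mul_zero,
      Finset.sum_ite_eq, Finset.sum_ite_eq', Finset.mem_univ, if_true, Finset.sum_const_zero,
      sub_zero, hij]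
    field_simp
    ring

theorem exists_basis_scaled_orthonormal [IsAlgClosed K] [NeZero (2 : K)] [FiniteDimensional K V]
    {B : BilinForm K V} (hsymm : IsSymm B) (hB : B.Nondegenerate) {c : K} (hc : c ≠ 0) :
    ∃ v : Module.Basis (Fin (finrank K V)) K V, ∀ i j, B (v i) (v j) = if i = j then c else 0 := by
  have : Invertible (2 : K) := invertibleOfNonzero two_ne_zero
  obtain ⟨w, hw⟩ := BilinForm.exists_orthogonal_basis hsymm
  have hne (i) : B (w i) (w i) ≠ 0 :=
    BilinForm.iIsOrtho.not_isOrtho_basis_self_of_nondegenerate hw hB i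
  choose r hr using fun i => IsAlgClosed.exists_pow_nat_eq (c / B (w i) (w i)) two_pos
  have hr0 (i) : r i ≠ 0 := fun h =>
    div_ne_zero hc (hne i) (by rw [← hr i, h, zero_pow two_ne_zero])
  refine ⟨w.isUnitSMul fun i => (hr0 i).isUnit, fun i j => ?_⟩
  simp only [Module.Basis.isUnitSMul_apply, map_smul, LinearMap.smul_apply, smul_eq_mul]
  split_ifs with hij
  · subst hij
    rw [← mul_assoc, ← pow_two, hr, div_mul_cancel₀ _ (hne i)]
  · rw [show B (w i) (w j) = 0 from hw hij, mul_zero, mul_zero]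

theorem linearIndependent_of_dual_family {ι : Type*} [DecidableEq ι] {B : BilinForm K V}
    {w w' : ι → V} (hww' : ∀ i j, B (w' i) (w j) = if i = j then 1 else 0) :
    LinearIndependent K w :=
  .of_pairwise_dual_eq_zero_one w (fun i => B (w' i))
    (fun i j hij => (hww' i j).trans (if_neg hij)) fun i => (hww' i i).trans (if_pos rfl)

theorem isCompl_span_orthogonal_of_dual_family {ι : Type*} [Finite ι] [DecidableEq ι]
    [FiniteDimensional K V] {B : BilinForm K V} (hsymm : IsSymm B) {w w' : ι → V}
    (hww' : ∀ i j, B (w' i) (w j) = if i = j then 1 else 0)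
    (hw' : ∀ i, w' i ∈ Submodule.span K (Set.range w)) :
    IsCompl (Submodule.span K (Set.range w)) (B.orthogonal (Submodule.span K (Set.range w))) := by
  have := Fintype.ofFinite ι
  refine (BilinForm.isCompl_orthogonal_iff_disjoint hsymm.isRefl).2 <|
    Submodule.disjoint_def.2 fun x hx hxo => ?_
  obtain ⟨c, rfl⟩ := (Submodule.mem_span_range_iff_exists_fun K).1 hx
  refine Finset.sum_eq_zero fun i _ => ?_
  have hci : B (w' i) (∑ j, c j • w j) = 0 := BilinForm.mem_orthogonal_iff.1 hxo _ (hw' i)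
  simp only [map_sum, map_smul, hww', smul_eq_mul, mul_ite, mul_one, mul_zero, Finset.sum_ite_eq,
    Finset.mem_univ, if_true] at hci
  rw [hci, zero_smul]

theorem exists_scaled_orthonormal_family_orthogonal [IsAlgClosed K] [NeZero (2 : K)]
    [FiniteDimensional K V] {B : BilinForm K V} (hsymm : IsSymm B) (hB : B.Nondegenerate)
    {c : K} (hc : c ≠ 0) {H : Submodule K V} (hH : IsCompl H (B.orthogonal H)) {k : ℕ}
    (hk : finrank K V = finrank K H + k) :
    ∃ z : Fin k → V, (∀ x ∈ H, ∀ i, B x (z i) = 0) ∧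
      (∀ i j, B (z i) (z j) = if i = j then c else 0) ∧
      H ⊔ Submodule.span K (Set.range z) = ⊤ := by
  have hZ : finrank K (B.orthogonal H) = k := by
    rw [BilinForm.finrank_orthogonal hB, hk, Nat.add_sub_cancel_left]
  have hZnd : (B.restrict (B.orthogonal H)).Nondegenerate :=
    (BilinForm.restrict_nondegenerate_iff_isCompl_orthogonal hsymm.isRefl).2
      (by rw [BilinForm.orthogonal_orthogonal hB hsymm.isRefl]; exact hH.symm)
  subst hZ
  obtain ⟨v, hv⟩ := exists_basis_scaled_orthonormal (hsymm.domRestrict _) hZnd hc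
  refine ⟨fun i => v i, fun x hx i => BilinForm.mem_orthogonal_iff.1 (v i).2 x hx, hv, ?_⟩
  have hspan : Submodule.span K (Set.range fun i => (v i : V)) = B.orthogonal H := by
    have hmap := congrArg (Submodule.map (B.orthogonal H).subtype) v.span_eq
    rwa [Submodule.map_span, ← Set.range_comp, Submodule.map_subtype_top] at hmap
  rw [hspan, hH.sup_eq_top]

theorem exists_witt_decomposition [IsAlgClosed K] [NeZero (2 : K)] [FiniteDimensional K V]
    {B : BilinForm K V} (hsymm : IsSymm B) (hB : B.Nondegenerate) {c : K} (hc : c ≠ 0) {n k : ℕ}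
    (hV : finrank K V = n + n + k) {e : Fin n → V} (he : LinearIndependent K e)
    (hee : ∀ i j, B (e i) (e j) = 0) :
    ∃ (t : Fin n → V) (z : Fin k → V),
      (∀ i j, B (e i) (t j) = if i = j then 1 else 0) ∧ (∀ i j, B (t i) (t j) = 0) ∧
      (∀ i j, B (e i) (z j) = 0) ∧ (∀ i j, B (t i) (z j) = 0) ∧
      (∀ i j, B (z i) (z j) = if i = j then c else 0) ∧
      Submodule.span K (Set.range e) ⊔ Submodule.span K (Set.range t) ⊔
        Submodule.span K (Set.range z) = ⊤ := by
  obtain ⟨t, het, htt⟩ := exists_isotropic_dual_family hsymm hB he hee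
  have hte (i j) : B (t i) (e j) = if i = j then 1 else 0 := by
    rw [← hsymm.eq, RingHom.id_apply, het]; simp only [eq_comm]
  have hdual : ∀ i j, B (Sum.elim t e i) (Sum.elim e t j) = if i = j then 1 else 0 := by
    rintro (i | i) (j | j) <;> simp [het, hte, hee, htt]
  have hmem (i) : Sum.elim e t i ∈ Submodule.span K (Set.range (Sum.elim e t)) :=
    Submodule.subset_span ⟨i, rfl⟩
  have hH := isCompl_span_orthogonal_of_dual_family hsymm hdual
    (Sum.rec (fun i => hmem (.inr i)) fun i => hmem (.inl i))
  have hdim := finrank_span_eq_card (linearIndependent_of_dual_family hdual)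
  rw [Fintype.card_sum, Fintype.card_fin] at hdim
  obtain ⟨z, hHz, hzz, htop⟩ := exists_scaled_orthonormal_family_orthogonal hsymm hB hc hH
    (hV.trans (by rw [hdim]))
  rw [Set.Sum.elim_range, Submodule.span_union] at htop
  exact ⟨t, z, het, htt, fun i => hHz _ (hmem (.inl i)), fun i => hHz _ (hmem (.inr i)), hzz, htop⟩

theorem exists_witt_complement [IsAlgClosed K] [NeZero (2 : K)] [FiniteDimensional K V]
    {B : BilinForm K V} (hsymm : IsSymm B) (hB : B.Nondegenerate) {c : K} (hc : c ≠ 0) {m n : ℕ}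
    (h : n ≤ m) (hV : finrank K V = n + m) {e : Fin n → V} (he : LinearIndependent K e)
    (hee : ∀ i j, B (e i) (e j) = 0) :
    ∃ x : Fin m → V, (∀ i j, B (e i) (x j) = if Fin.castLE h i = j then 1 else 0) ∧
      (∀ i j, B (x i) (x j) = if i = j ∧ n ≤ i then c else 0) ∧
      Submodule.span K (Set.range e) ⊔ Submodule.span K (Set.range x) = ⊤ := by
  obtain ⟨k, rfl⟩ := Nat.exists_eq_add_of_le h
  obtain ⟨t, z, het, htt, hez, htz, hzz, htop⟩ :=
    exists_witt_decomposition hsymm hB hc (hV.trans (add_assoc n n k).symm) he hee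
  have hzt (i j) : B (z i) (t j) = 0 := by rw [← hsymm.eq, RingHom.id_apply, htz]
  have hne (i : Fin n) (j : Fin k) : Fin.castAdd k i ≠ Fin.natAdd n j :=
    Fin.ne_of_lt (Fin.lt_def.2 (by rw [Fin.val_castAdd, Fin.val_natAdd]; omega))
  refine ⟨Sum.elim t z ∘ finSumFinEquiv.symm, fun i => ?_, fun i j => ?_, ?_⟩
  · have hcast : Fin.castLE h i = Fin.castAdd k i := rfl
    refine Fin.addCases (fun j => ?_) fun j => ?_
    · simp [hcast, het]
    · simp [hcast, hez, hne]
  · induction i using Fin.addCases <;> induction j using Fin.addCases <;>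
      simp [htt, htz, hzt, hzz, hne, (hne _ _).symm]
  · rw [sup_assoc] at htop
    rw [EquivLike.range_comp, Set.Sum.elim_range, Submodule.span_union, htop]

end BilinearForms

section MultiplicationForm

open LinearMap (BilinForm IsSymm)
open Module (finrank)

variable {K A : Type*} [Field K] [CommRing A] [Algebra K A]

/-- The symmetric bilinear form `(a, b) ↦ φ (a * b)` attached to a functional `φ` on a
`K`-algebra; `φ` is a dual socle generator of a Gorenstein algebra when it is nondegenerate. -/
def mulForm (φ : A →ₗ[K] K) : BilinForm K A :=
  (LinearMap.mul K A).compr₂ φ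

theorem mulForm_apply (φ : A →ₗ[K] K) (a b : A) : mulForm φ a b = φ (a * b) :=
  rfl

theorem isSymm_mulForm (φ : A →ₗ[K] K) : IsSymm (mulForm φ) :=
  ⟨fun a b => congrArg φ (mul_comm a b)⟩

theorem nondegenerate_mulForm_iff {φ : A →ₗ[K] K} :
    (mulForm φ).Nondegenerate ↔ ∀ a, (∀ b, φ (a * b) = 0) → a = 0 :=
  (isSymm_mulForm φ).isRefl.nondegenerate_iff_separatingLeft

theorem nondegenerate_mulForm_of_socle {φ : A →ₗ[K] K} {I : Ideal A} {N : ℕ} (hI : I ^ N = ⊥)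
    (hφ : ∀ a ∈ I.annihilator, φ a = 0 → a = 0) : (mulForm φ).Nondegenerate := by
  refine nondegenerate_mulForm_iff.2 fun a ha => ?_
  have descend (k : ℕ) (hk : ∀ y ∈ I ^ (k + 1), a * y = 0) : ∀ y ∈ I ^ k, a * y = 0 :=
    fun y hy => hφ _ (Submodule.mem_annihilator.2 fun x hx => by
      rw [smul_eq_mul, mul_assoc, hk _ (pow_succ I k ▸ Ideal.mul_mem_mul hy hx)]) (ha y)
  have hall : ∀ y ∈ I ^ 0, a * y = 0 :=
    Nat.decreasingInduction (motive := fun k _ => ∀ y ∈ I ^ k, a * y = 0)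
      (fun k _ hk => descend k hk)
      (fun y hy => by rw [hI, Ideal.mem_bot] at hy; rw [hy, mul_zero]) N.zero_le
  simpa using hall 1 (by simp)

theorem orthogonal_mulForm {φ : A →ₗ[K] K} (hφ : (mulForm φ).Nondegenerate) (I : Ideal A) :
    (mulForm φ).orthogonal (I.restrictScalars K) = I.annihilator.restrictScalars K := by
  ext a
  simp only [BilinForm.mem_orthogonal_iff, Submodule.restrictScalars_mem,
    Submodule.mem_annihilator, smul_eq_mul]
  refine ⟨fun h y hy => nondegenerate_mulForm_iff.1 hφ _ fun b => ?_, fun h y hy => ?_⟩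
  · rw [mul_assoc, mul_comm]
    exact h _ (I.mul_mem_right b hy)
  · rw [mulForm_apply, mul_comm, h y hy, map_zero]

theorem finrank_annihilator [FiniteDimensional K A] {φ : A →ₗ[K] K}
    (hφ : (mulForm φ).Nondegenerate) (I : Ideal A) :
    finrank K I.annihilator = finrank K A - finrank K I := by
  have h := BilinForm.finrank_orthogonal hφ (I.restrictScalars K)
  rwa [orthogonal_mulForm hφ] at h

end MultiplicationForm

section LocalAlgebra

open IsLocalRing
open Module (finrank)

variable {K A : Type*} [Field K] [CommRing A] [Algebra K A]

theorem finrank_quotient_ideal [FiniteDimensional K A] (I : Ideal A) :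
    finrank K (A ⧸ I) = finrank K A - finrank K I :=
  Submodule.finrank_quotient (I.restrictScalars K)

theorem finrank_ideal_mono [FiniteDimensional K A] {I J : Ideal A} (h : I ≤ J) :
    finrank K I ≤ finrank K J :=
  Submodule.finrank_mono (s := I.restrictScalars K) (t := J.restrictScalars K) h

theorem finrank_add_one_of_forall_sub_algebraMap_mem [FiniteDimensional K A] {I : Ideal A}
    (hI : I ≠ ⊤) (h : ∀ a : A, ∃ c : K, a - algebraMap K A c ∈ I) :
    finrank K I + 1 = finrank K A := by
  have hdim := finrank_sup_of_linearIndependent_mod (fun _ : Unit => (1 : A))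
    (I.restrictScalars K) fun c hc => by
      by_contra hne
      have hc0 : c () ≠ 0 := fun h0 => hne (funext fun _ => h0)
      refine hI (I.eq_top_of_isUnit_mem ?_ ((IsUnit.mk0 _ hc0).map (algebraMap K A)))
      simpa [Algebra.smul_def] using hc
  have htop : Submodule.span K (Set.range fun _ : Unit => (1 : A)) ⊔ I.restrictScalars K = ⊤ :=
    eq_top_iff.2 fun a _ => by
      obtain ⟨c, hc⟩ := h a
      exact Submodule.mem_sup.2 ⟨c • 1, Submodule.smul_mem _ _ (Submodule.subset_span ⟨(), rfl⟩),
        _, hc, by rw [Algebra.algebraMap_eq_smul_one]; abel⟩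
  rw [htop, finrank_top, Fintype.card_unit, add_comm] at hdim
  exact hdim.symm

theorem exists_mem_subalgebra_sub_mem_pow_succ {S : Subalgebra K A} {I : Ideal A}
    (hS : ∀ a, ∃ s ∈ S, a - s ∈ I ^ 2) (j : ℕ) {y : A} (hy : y ∈ I ^ (j + 1)) :
    ∃ s ∈ S, s ∈ I ^ (j + 1) ∧ y - s ∈ I ^ (j + 2) := by
  induction j generalizing y with
  | zero =>
    obtain ⟨s, hsS, hs⟩ := hS y
    exact ⟨s, hsS, (Submodule.sub_mem_iff_right _ hy).1 (Ideal.pow_le_pow_right one_le_two hs), hs⟩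
  | succ j ih =>
    rw [pow_succ] at hy
    refine Submodule.mul_induction_on hy (fun a ha b hb => ?_) fun a b => ?_
    · obtain ⟨s, hsS, hs, has⟩ := ih ha
      obtain ⟨r, hrS, hbr⟩ := hS b
      have hr : r ∈ I :=
        (Submodule.sub_mem_iff_right _ hb).1 (by simpa using Ideal.pow_le_pow_right one_le_two hbr)
      refine ⟨s * r, S.mul_mem hsS hrS, pow_succ I (j + 1) ▸ Ideal.mul_mem_mul hs hr, ?_⟩
      have h1 : a * (b - r) ∈ I ^ (j + 1 + 2) := pow_add I (j + 1) 2 ▸ Ideal.mul_mem_mul ha hbr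
      have h2 : (a - s) * r ∈ I ^ (j + 1 + 2) := pow_succ I (j + 2) ▸ Ideal.mul_mem_mul has hr
      convert add_mem h1 h2 using 1
      ring
    · rintro ⟨s, hsS, hs, has⟩ ⟨r, hrS, hr, hbr⟩
      exact ⟨s + r, S.add_mem hsS hrS, add_mem hs hr, by convert add_mem has hbr using 1; ring⟩

theorem subalgebra_eq_top_of_sub_mem_sq {S : Subalgebra K A} {I : Ideal A} {N : ℕ}
    (hI : I ^ N = ⊥) (hS : ∀ a, ∃ s ∈ S, a - s ∈ I ^ 2) : S = ⊤ := by
  have approx (j : ℕ) (a : A) : ∃ s ∈ S, a - s ∈ I ^ (j + 1) := by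
    induction j with
    | zero =>
      obtain ⟨s, hsS, hs⟩ := hS a
      exact ⟨s, hsS, Ideal.pow_le_pow_right one_le_two hs⟩
    | succ j ih =>
      obtain ⟨s, hsS, hs⟩ := ih
      obtain ⟨r, hrS, -, hr⟩ := exists_mem_subalgebra_sub_mem_pow_succ hS j hs
      exact ⟨s + r, S.add_mem hsS hrS, by rwa [← sub_sub]⟩
  refine eq_top_iff.2 fun a _ => ?_
  obtain ⟨s, hsS, hs⟩ := approx N a
  rw [pow_succ, hI, Submodule.bot_mul, Submodule.mem_bot, sub_eq_zero] at hs
  rwa [hs]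

theorem surjective_aeval_of_le_span_sup_sq {σ : Type*} {x : σ → A} {I : Ideal A} {N : ℕ}
    (hI : I ^ N = ⊥) (hres : ∀ a : A, ∃ c : K, a - algebraMap K A c ∈ I)
    (hx : I.restrictScalars K ≤
      Submodule.span K (Set.range x) ⊔ (I ^ 2).restrictScalars K) :
    Function.Surjective (MvPolynomial.aeval (R := K) x) := by
  have hspan : Submodule.span K (Set.range x) ≤ (Algebra.adjoin K (Set.range x)).toSubmodule :=
    Algebra.span_le_adjoin K _
  rw [← AlgHom.range_eq_top, ← Algebra.adjoin_range_eq_range_aeval]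
  refine subalgebra_eq_top_of_sub_mem_sq hI fun a => ?_
  obtain ⟨c, hc⟩ := hres a
  obtain ⟨p, hp, q, hq, hpq⟩ := Submodule.mem_sup.1 (hx hc)
  exact ⟨algebraMap K A c + p, add_mem (Subalgebra.algebraMap_mem _ c) (hspan hp),
    by rwa [← sub_sub, ← hpq, add_sub_cancel_left]⟩

variable [IsLocalRing A]

theorem residueFieldIsK_iff :
    residueFieldIsK K A ↔ ∀ a : A, ∃ c : K, a - algebraMap K A c ∈ maximalIdeal A := by
  have hinj : Function.Injective (algebraMap K (ResidueField A)) :=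
    (algebraMap K (ResidueField A)).injective
  rw [residueFieldIsK, Function.Bijective, and_iff_right hinj]
  refine (residue_surjective (R := A)).forall.trans <|
    forall_congr' fun a => exists_congr fun c => ?_
  rw [IsScalarTower.algebraMap_apply K A (ResidueField A), ResidueField.algebraMap_eq, eq_comm,
    ← sub_eq_zero, ← map_sub, residue_eq_zero_iff]

theorem socDimLoc_eq_finrank_annihilator :
    socDimLoc K A = finrank K (maximalIdeal A).annihilator := by
  rw [socDimLoc, Submodule.bot_colon]; rfl

theorem hilbLoc_eq_finrank_sub [FiniteDimensional K A] (i : ℕ) :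
    hilbLoc K A i = finrank K ↥(maximalIdeal A ^ i) - finrank K ↥(maximalIdeal A ^ (i + 1)) := by
  have hle := Submodule.finrank_le ((maximalIdeal A ^ i).restrictScalars K)
  change finrank K ↥(maximalIdeal A ^ i) ≤ _ at hle
  rw [hilbLoc, finrank_quotient_ideal, finrank_quotient_ideal]
  omega

end LocalAlgebra

section Apolarity

/-- The factorial `γ! = ∏ i, (γ i)!` of a multi-index, the constant by which
`x^γ ∘ y^γ` differs from `1`. -/
def multiFactorial {σ : Type*} (γ : σ →₀ ℕ) : ℕ :=
  γ.prod fun _ k => k.factorial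

theorem multiFactorial_ne_zero {σ : Type*} (γ : σ →₀ ℕ) : multiFactorial γ ≠ 0 :=
  Finset.prod_ne_zero_iff.2 fun i _ => (γ i).factorial_ne_zero

theorem multiFactorial_zero {σ : Type*} : multiFactorial (0 : σ →₀ ℕ) = 1 :=
  Finsupp.prod_zero_index

theorem multiFactorial_single {σ : Type*} (i : σ) (k : ℕ) :
    multiFactorial (Finsupp.single i k) = k.factorial :=
  Finsupp.prod_single_index Nat.factorial_zero

theorem multiFactorial_mapDomain {σ τ : Type*} {f : σ → τ} (hf : Function.Injective f)
    (γ : σ →₀ ℕ) : multiFactorial (γ.mapDomain f) = multiFactorial γ :=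
  Finsupp.prod_mapDomain_index_inj (h := fun _ (k : ℕ) => k.factorial) hf

theorem prod_descFactorial_mul_multiFactorial {σ : Type*} [Fintype σ] {β γ : σ →₀ ℕ}
    (h : γ ≤ β) :
    (∏ i, (β i).descFactorial ((β - γ) i)) * multiFactorial γ = multiFactorial β := by
  simp only [multiFactorial]
  rw [Finsupp.prod_fintype _ _ fun _ => Nat.factorial_zero,
    Finsupp.prod_fintype _ _ fun _ => Nat.factorial_zero, ← Finset.prod_mul_distrib]
  refine Finset.prod_congr rfl fun i _ => ?_
  rw [mul_comm, Finsupp.tsub_apply]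
  simpa only [Nat.sub_sub_self (h i)] using
    Nat.factorial_mul_descFactorial (Nat.sub_le (β i) (γ i))

variable {K : Type*} [Field K] {m : ℕ}

theorem contract_smul (c : K) (f : MvPowerSeries (Fin m) K) :
    contract (c • f) = c • contract f := by
  rw [contract, contract, ← map_smul]
  congr 1
  funext β
  simp only [Pi.smul_apply, map_smul, smul_eq_mul, mul_assoc, mul_smul, Finset.smul_sum]

theorem contract_monomial (f : MvPowerSeries (Fin m) K) (β : Fin m →₀ ℕ) :
    contract f (MvPolynomial.monomial β 1) = ∑ α ∈ Finset.Iic β,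
      (MvPowerSeries.coeff α f * ∏ i, ((β i).descFactorial (α i) : K)) •
        MvPolynomial.monomial (β - α) (1 : K) := by
  have h := (MvPolynomial.basisMonomials (Fin m) K).constr_basis K (fun β =>
    ∑ α ∈ Finset.Iic β, (MvPowerSeries.coeff α f * ∏ i, ((β i).descFactorial (α i) : K)) •
      MvPolynomial.monomial (β - α) (1 : K)) β
  rwa [MvPolynomial.coe_basisMonomials] at h

theorem coeff_contract_monomial (f : MvPowerSeries (Fin m) K) (β γ : Fin m →₀ ℕ) :
    MvPolynomial.coeff γ (contract f (MvPolynomial.monomial β 1)) * multiFactorial γ =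
      multiFactorial β * MvPowerSeries.coeff β (MvPowerSeries.monomial γ 1 * f) := by
  classical
  rw [contract_monomial, MvPolynomial.coeff_sum, MvPowerSeries.coeff_monomial_mul]
  simp only [MvPolynomial.coeff_smul, MvPolynomial.coeff_monomial, smul_eq_mul]
  split_ifs with h
  · rw [Finset.sum_eq_single (β - γ), if_pos (tsub_tsub_cancel_of_le h),
      ← prod_descFactorial_mul_multiFactorial h]
    · push_cast; ring
    · intro α hα hne
      rw [if_neg, mul_zero]
      rintro rfl
      exact hne (tsub_tsub_cancel_of_le (Finset.mem_Iic.1 hα)).symm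
    · exact fun hα => absurd (Finset.mem_Iic.2 tsub_le_self) hα
  · rw [mul_zero, Finset.sum_eq_zero, zero_mul]
    intro α _
    rw [if_neg, mul_zero]
    rintro rfl
    exact h tsub_le_self

/-- The functional `f ↦ (f ∘ F)(0)` on the power series ring, through which Macaulay's inverse
system identifies `F` with a dual socle generator of `R ⧸ annR F`. -/
noncomputable def apolarFunctional (F : MvPolynomial (Fin m) K) :
    MvPowerSeries (Fin m) K →ₗ[K] K where
  toFun f := MvPolynomial.coeff 0 (contract f F)
  map_add' f g := by rw [contract_add, LinearMap.add_apply, MvPolynomial.coeff_add]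
  map_smul' c f := by
    rw [contract_smul, LinearMap.smul_apply, MvPolynomial.coeff_smul, RingHom.id_apply]

theorem coeff_contract (f : MvPowerSeries (Fin m) K) (F : MvPolynomial (Fin m) K)
    (γ : Fin m →₀ ℕ) :
    MvPolynomial.coeff γ (contract f F) * multiFactorial γ =
      ∑ β ∈ F.support, MvPolynomial.coeff β F * multiFactorial β *
        MvPowerSeries.coeff β (MvPowerSeries.monomial γ 1 * f) := by
  conv_lhs => rw [F.as_sum]
  rw [map_sum, MvPolynomial.coeff_sum, Finset.sum_mul]
  refine Finset.sum_congr rfl fun β _ => ?_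
  have hβ : MvPolynomial.monomial β (MvPolynomial.coeff β F) =
      MvPolynomial.coeff β F • MvPolynomial.monomial β 1 := by
    rw [MvPolynomial.smul_monomial, smul_eq_mul, mul_one]
  rw [hβ, map_smul, MvPolynomial.coeff_smul, smul_eq_mul, mul_assoc, coeff_contract_monomial,
    mul_assoc]

theorem apolarFunctional_eq_sum (F : MvPolynomial (Fin m) K) (f : MvPowerSeries (Fin m) K) :
    apolarFunctional F f = ∑ β ∈ F.support,
      MvPolynomial.coeff β F * multiFactorial β * MvPowerSeries.coeff β f := by
  have h := coeff_contract f F 0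
  rwa [multiFactorial_zero, Nat.cast_one, mul_one, MvPowerSeries.monomial_zero_one, one_mul] at h

theorem apolarFunctional_monomial (F : MvPolynomial (Fin m) K) (γ : Fin m →₀ ℕ) :
    apolarFunctional F (MvPowerSeries.monomial γ 1) =
      multiFactorial γ * MvPolynomial.coeff γ F := by
  classical
  rw [apolarFunctional_eq_sum, Finset.sum_eq_single γ, MvPowerSeries.coeff_monomial_same]
  · ring
  · intro β _ hβ
    rw [MvPowerSeries.coeff_monomial_ne hβ, mul_zero]
  · intro hγ
    rw [MvPolynomial.notMem_support_iff.1 hγ, zero_mul, zero_mul]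

theorem mem_annR_iff [CharZero K] {F : MvPolynomial (Fin m) K} {f : MvPowerSeries (Fin m) K} :
    f ∈ annR F ↔ ∀ u, apolarFunctional F (u * f) = 0 := by
  refine ⟨fun h u => (congrArg (MvPolynomial.coeff 0) (h u)).trans (MvPolynomial.coeff_zero 0),
    fun h u => MvPolynomial.ext _ _ fun γ => ?_⟩
  have hγ := coeff_contract (u * f) F γ
  rw [← apolarFunctional_eq_sum, ← mul_assoc, h] at hγ
  exact (mul_eq_zero.1 hγ).resolve_right (Nat.cast_ne_zero.2 (multiFactorial_ne_zero γ))

theorem exists_apolarFunctional_mul_coe (F : MvPolynomial (Fin m) K)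
    (f : MvPowerSeries (Fin m) K) :
    ∃ p : MvPolynomial (Fin m) K, ∀ u, apolarFunctional F (u * p) = apolarFunctional F (u * f) := by
  classical
  let N : Fin m →₀ ℕ := ∑ β ∈ F.support, β
  have hN (β) (hβ : β ∈ F.support) : β ≤ N :=
    Finset.single_le_sum (f := fun β => β) (fun _ _ => zero_le) hβ
  refine ⟨MvPowerSeries.trunc' K N f, fun u => ?_⟩
  rw [apolarFunctional_eq_sum, apolarFunctional_eq_sum]
  refine Finset.sum_congr rfl fun β hβ => congrArg _ ?_
  rw [MvPowerSeries.coeff_mul, MvPowerSeries.coeff_mul]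
  refine Finset.sum_congr rfl fun x hx => ?_
  have hx2 : x.2 ≤ N := (Finset.HasAntidiagonal.antidiagonal.snd_le hx).trans (hN β hβ)
  rw [MvPolynomial.coeff_coe, MvPowerSeries.coeff_trunc', if_pos hx2]

theorem mem_annR_iff_forall_polynomial [CharZero K] {F : MvPolynomial (Fin m) K}
    {f : MvPowerSeries (Fin m) K} :
    f ∈ annR F ↔ ∀ u : MvPolynomial (Fin m) K, apolarFunctional F (u * f) = 0 := by
  refine mem_annR_iff.trans ⟨fun h u => h u, fun h u => ?_⟩
  obtain ⟨p, hp⟩ := exists_apolarFunctional_mul_coe F u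
  rw [mul_comm, ← hp, mul_comm, h]

/-- The quotient map `K[x_1, …, x_m] → R ⧸ annR F`. -/
noncomputable def toQuotientAnnR (F : MvPolynomial (Fin m) K) :
    MvPolynomial (Fin m) K →ₐ[K] MvPowerSeries (Fin m) K ⧸ annR F :=
  (Ideal.Quotient.mkₐ K (annR F)).comp (MvPolynomial.coeToMvPowerSeries.algHom K)

theorem toQuotientAnnR_apply (F p : MvPolynomial (Fin m) K) :
    toQuotientAnnR F p = Ideal.Quotient.mk (annR F) (p : MvPowerSeries (Fin m) K) := by
  simp [toQuotientAnnR]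

theorem toQuotientAnnR_surjective [CharZero K] (F : MvPolynomial (Fin m) K) :
    Function.Surjective (toQuotientAnnR F) := fun a => by
  obtain ⟨f, rfl⟩ := Ideal.Quotient.mk_surjective a
  obtain ⟨p, hp⟩ := exists_apolarFunctional_mul_coe F f
  refine ⟨p, ?_⟩
  rw [toQuotientAnnR_apply, Ideal.Quotient.mk_eq_mk_iff_sub_mem, mem_annR_iff]
  exact fun u => by rw [mul_sub, map_sub, hp, sub_self]

theorem toQuotientAnnR_eq_zero_iff [CharZero K] {F p : MvPolynomial (Fin m) K} :
    toQuotientAnnR F p = 0 ↔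
      ∀ u : MvPolynomial (Fin m) K, apolarFunctional F ((u * p : MvPolynomial (Fin m) K)) = 0 := by
  rw [toQuotientAnnR_apply, Ideal.Quotient.eq_zero_iff_mem, mem_annR_iff_forall_polynomial]
  simp only [MvPolynomial.coe_mul]

variable {A : Type*} [CommRing A] [Algebra K A]

/-- Macaulay's inverse system: the elements `x i` generate `A`, and `φ` is a dual socle generator
whose values on the monomials in `x` are the coefficients of `F`. The factorials come from the
differentiation action, as `x^γ ∘ y^γ = γ!`. -/
structure IsMacaulayPresentation (F : MvPolynomial (Fin m) K) (x : Fin m → A)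
    (φ : A →ₗ[K] K) : Prop where
  surjective : Function.Surjective (MvPolynomial.aeval (R := K) x)
  nondegenerate : (mulForm φ).Nondegenerate
  apply_monomial (γ : Fin m →₀ ℕ) :
    φ (γ.prod fun i k => x i ^ k) = multiFactorial γ * MvPolynomial.coeff γ F

theorem apply_aeval_eq_apolarFunctional {F : MvPolynomial (Fin m) K} {x : Fin m → A}
    {φ : A →ₗ[K] K}
    (h : ∀ γ : Fin m →₀ ℕ,
      φ (γ.prod fun i k => x i ^ k) = multiFactorial γ * MvPolynomial.coeff γ F)
    (p : MvPolynomial (Fin m) K) : φ (MvPolynomial.aeval x p) = apolarFunctional F p := by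
  induction p using MvPolynomial.induction_on' with
  | monomial γ c =>
    rw [MvPolynomial.aeval_monomial, ← Algebra.smul_def, map_smul, h, ← apolarFunctional_monomial,
      ← map_smul, ← map_smul, smul_eq_mul, mul_one, MvPolynomial.coe_monomial]
  | add p q hp hq => rw [map_add, map_add, hp, hq, MvPolynomial.coe_add, map_add]

theorem IsMacaulayPresentation.nonempty_algEquiv [CharZero K] {F : MvPolynomial (Fin m) K}
    {x : Fin m → A} {φ : A →ₗ[K] K} (h : IsMacaulayPresentation F x φ) :
    Nonempty (A ≃ₐ[K] (MvPowerSeries (Fin m) K ⧸ annR F)) := by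
  have hφ := apply_aeval_eq_apolarFunctional h.apply_monomial
  have hker : RingHom.ker (MvPolynomial.aeval (R := K) x) = RingHom.ker (toQuotientAnnR F) := by
    ext p
    rw [RingHom.mem_ker, RingHom.mem_ker, toQuotientAnnR_eq_zero_iff]
    refine ⟨fun hp u => by rw [← hφ, map_mul, hp, mul_zero, map_zero], fun hp => ?_⟩
    refine nondegenerate_mulForm_iff.1 h.nondegenerate _ fun b => ?_
    obtain ⟨u, rfl⟩ := h.surjective b
    rw [← map_mul, hφ, mul_comm, hp]
  exact ⟨(Ideal.quotientKerAlgEquivOfSurjective h.surjective).symm.trans <|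
    (Ideal.quotientEquivAlgOfEq K hker).trans <|
      Ideal.quotientKerAlgEquivOfSurjective (toQuotientAnnR_surjective F)⟩

/-- The functional induced by `apolarFunctional F` on `R ⧸ annR F`. -/
noncomputable def quotientApolarFunctional [CharZero K] (F : MvPolynomial (Fin m) K) :
    (MvPowerSeries (Fin m) K ⧸ annR F) →ₗ[K] K :=
  ((annR F).restrictScalars K).liftQ (apolarFunctional F) fun f hf => by
    rw [LinearMap.mem_ker, ← one_mul f, mem_annR_iff.1 hf]

theorem quotientApolarFunctional_toQuotientAnnR [CharZero K] (F p : MvPolynomial (Fin m) K) :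
    quotientApolarFunctional F (toQuotientAnnR F p) = apolarFunctional F p := by
  rw [toQuotientAnnR_apply]; rfl

theorem exists_isMacaulayPresentation_of_algEquiv [CharZero K] {F : MvPolynomial (Fin m) K}
    (e : A ≃ₐ[K] (MvPowerSeries (Fin m) K ⧸ annR F)) :
    ∃ (x : Fin m → A) (φ : A →ₗ[K] K), IsMacaulayPresentation F x φ := by
  let π : MvPolynomial (Fin m) K →ₐ[K] A := e.symm.toAlgHom.comp (toQuotientAnnR F)
  let φ : A →ₗ[K] K := quotientApolarFunctional F ∘ₗ e.toLinearMap
  have hπ : Function.Surjective π := e.symm.surjective.comp (toQuotientAnnR_surjective F)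
  have hφ (p) : φ (π p) = apolarFunctional F p :=
    (congrArg (quotientApolarFunctional F) (e.apply_symm_apply _)).trans
      (quotientApolarFunctional_toQuotientAnnR F p)
  have haeval : MvPolynomial.aeval (fun i => π (MvPolynomial.X i)) = π :=
    (MvPolynomial.aeval_unique π).symm
  refine ⟨fun i => π (MvPolynomial.X i), φ, by rwa [haeval], ?_, fun γ => ?_⟩
  · refine nondegenerate_mulForm_iff.2 fun a ha => ?_
    obtain ⟨p, rfl⟩ := hπ a
    have hp : toQuotientAnnR F p = 0 := toQuotientAnnR_eq_zero_iff.2 fun u => by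
      rw [← hφ, map_mul, mul_comm, ha]
    exact (congrArg e.symm hp).trans (map_zero e.symm)
  · have hmon := MvPolynomial.aeval_monomial (fun i => π (MvPolynomial.X i)) γ (1 : K)
    rw [haeval, map_one (algebraMap K A), one_mul] at hmon
    rw [← hmon, hφ, MvPolynomial.coe_monomial, apolarFunctional_monomial]

theorem nonempty_algEquiv_quotient_annR_iff [CharZero K] {F : MvPolynomial (Fin m) K} :
    Nonempty (A ≃ₐ[K] (MvPowerSeries (Fin m) K ⧸ annR F)) ↔
      ∃ (x : Fin m → A) (φ : A →ₗ[K] K), IsMacaulayPresentation F x φ :=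
  ⟨fun ⟨e⟩ => exists_isMacaulayPresentation_of_algEquiv e, fun ⟨_, _, h⟩ => h.nonempty_algEquiv⟩

end Apolarity

section Monomials

variable {σ K A : Type*} [Field K] [CommRing A] [Algebra K A]

theorem exists_eq_add_single_of_apply_ne_zero {γ : σ →₀ ℕ} {i : σ} (h : γ i ≠ 0) :
    ∃ δ : σ →₀ ℕ, γ = δ + Finsupp.single i 1 :=
  ⟨γ - Finsupp.single i 1,
    (tsub_add_cancel_of_le (Finsupp.single_le_iff.2 (Nat.one_le_iff_ne_zero.2 h))).symm⟩

theorem exists_eq_add_single_of_degree_eq_succ {γ : σ →₀ ℕ} {d : ℕ} (h : γ.degree = d + 1) :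
    ∃ (δ : σ →₀ ℕ) (i : σ), δ.degree = d ∧ γ = δ + Finsupp.single i 1 := by
  have hγ : γ ≠ 0 := (Finsupp.degree_eq_zero_iff γ).not.1 (h ▸ d.succ_ne_zero)
  obtain ⟨i, hi⟩ := DFunLike.ne_iff.1 hγ
  obtain ⟨δ, rfl⟩ := exists_eq_add_single_of_apply_ne_zero hi
  rw [map_add, Finsupp.degree_single, Nat.add_right_cancel_iff] at h
  exact ⟨δ, i, h, rfl⟩

theorem exists_eq_single_of_degree_eq_one {γ : σ →₀ ℕ} (h : γ.degree = 1) :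
    ∃ i, γ = Finsupp.single i 1 := by
  obtain ⟨δ, i, hδ, rfl⟩ := exists_eq_add_single_of_degree_eq_succ h
  exact ⟨i, by rw [(Finsupp.degree_eq_zero_iff δ).1 hδ, zero_add]⟩

theorem exists_eq_single_add_single_of_degree_eq_two {γ : σ →₀ ℕ} (h : γ.degree = 2) :
    ∃ i j, γ = Finsupp.single i 1 + Finsupp.single j 1 := by
  obtain ⟨δ, j, hδ, rfl⟩ := exists_eq_add_single_of_degree_eq_succ h
  obtain ⟨i, rfl⟩ := exists_eq_single_of_degree_eq_one hδ
  exact ⟨i, j, rfl⟩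

theorem prod_pow_single (x : σ → A) (i : σ) :
    ((Finsupp.single i 1).prod fun i k => x i ^ k) = x i := by
  rw [Finsupp.prod_single_index (h := fun i k => x i ^ k) (pow_zero _), pow_one]

theorem prod_pow_add (x : σ → A) (γ δ : σ →₀ ℕ) :
    ((γ + δ).prod fun i k => x i ^ k) =
      (γ.prod fun i k => x i ^ k) * δ.prod fun i k => x i ^ k := by
  classical
  exact Finsupp.prod_add_index' (fun _ => pow_zero _) fun _ _ _ => pow_add _ _ _

theorem prod_pow_mem_pow_degree {x : σ → A} {I : Ideal A} (hx : ∀ i, x i ∈ I) (γ : σ →₀ ℕ) :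
    (γ.prod fun i k => x i ^ k) ∈ I ^ γ.degree := by
  rw [Finsupp.degree_apply, ← Finset.prod_pow_eq_pow_sum]
  exact Ideal.prod_mem_prod fun i _ => Ideal.pow_mem_pow (hx i) _

theorem map_idealOfVars (x : σ → A) :
    (MvPolynomial.idealOfVars σ K).map (MvPolynomial.aeval x) = Ideal.span (Set.range x) := by
  rw [Ideal.map_span, ← Set.range_comp]
  simp only [Function.comp_def, MvPolynomial.aeval_X]

variable {x : σ → A} (hx : Function.Surjective (MvPolynomial.aeval (R := K) x))
include hx

theorem eq_zero_of_forall_prod_pow_eq_zero {V : Type*} [AddCommGroup V] [Module K V]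
    (L : A →ₗ[K] V) {d : ℕ}
    (hL : ∀ γ : σ →₀ ℕ, d ≤ γ.degree → L (γ.prod fun i k => x i ^ k) = 0)
    {a : A} (ha : a ∈ Ideal.span (Set.range x) ^ d) : L a = 0 := by
  rw [← map_idealOfVars (K := K), ← Ideal.map_pow] at ha
  obtain ⟨p, hp, rfl⟩ := (Ideal.mem_map_iff_of_surjective _ hx).1 ha
  rw [MvPolynomial.mem_pow_idealOfVars_iff] at hp
  rw [MvPolynomial.aeval_def, MvPolynomial.eval₂_eq, map_sum]
  refine Finset.sum_eq_zero fun γ hγ => ?_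
  rw [← Algebra.smul_def, map_smul]
  exact smul_eq_zero_of_right _ (hL γ (hp γ hγ))

theorem mem_annihilator_span_range_pow_iff {φ : A →ₗ[K] K} (hφ : (mulForm φ).Nondegenerate)
    {d : ℕ} {a : A} :
    a ∈ (Ideal.span (Set.range x) ^ d).annihilator ↔
      ∀ γ : σ →₀ ℕ, d ≤ γ.degree → φ (a * γ.prod fun i k => x i ^ k) = 0 := by
  refine ⟨fun ha γ hγ => ?_, fun h => ?_⟩
  · have hxγ : (γ.prod fun i k => x i ^ k) ∈ Ideal.span (Set.range x) ^ d :=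
      Ideal.pow_le_pow_right hγ
        (prod_pow_mem_pow_degree (fun i => Ideal.subset_span (Set.mem_range_self i)) γ)
    rw [← smul_eq_mul, Submodule.mem_annihilator.1 ha _ hxγ, map_zero]
  · rw [← Submodule.restrictScalars_mem K, ← orthogonal_mulForm hφ,
      LinearMap.BilinForm.mem_orthogonal_iff]
    intro b hb
    rw [mulForm_apply, mul_comm]
    exact eq_zero_of_forall_prod_pow_eq_zero hx (mulForm φ a) h hb

theorem span_range_pow_eq_bot_iff {φ : A →ₗ[K] K} (hφ : (mulForm φ).Nondegenerate) {d : ℕ} :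
    Ideal.span (Set.range x) ^ d = ⊥ ↔
      ∀ γ : σ →₀ ℕ, d ≤ γ.degree → φ (γ.prod fun i k => x i ^ k) = 0 := by
  rw [← Submodule.annihilator_eq_top_iff, Ideal.eq_top_iff_one,
    mem_annihilator_span_range_pow_iff hx hφ]
  simp only [one_mul]

theorem exists_sub_algebraMap_mem_span_range (a : A) :
    ∃ c : K, a - algebraMap K A c ∈ Ideal.span (Set.range x) := by
  obtain ⟨p, rfl⟩ := hx a
  refine ⟨MvPolynomial.constantCoeff p, ?_⟩
  have hp : p - MvPolynomial.C (MvPolynomial.constantCoeff p) ∈ MvPolynomial.idealOfVars σ K := by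
    rw [← pow_one (MvPolynomial.idealOfVars σ K), MvPolynomial.mem_pow_idealOfVars_iff']
    intro γ hγ
    rw [(Finsupp.degree_eq_zero_iff γ).1 (Nat.lt_one_iff.1 hγ), MvPolynomial.coeff_sub,
      MvPolynomial.coeff_zero_C, ← MvPolynomial.constantCoeff_eq, sub_self]
  rw [← map_idealOfVars (K := K), ← MvPolynomial.aeval_C x, ← map_sub]
  exact Ideal.mem_map_of_mem _ hp

theorem span_range_eq_span_sup_sq :
    (Ideal.span (Set.range x)).restrictScalars K =
      Submodule.span K (Set.range x) ⊔ (Ideal.span (Set.range x) ^ 2).restrictScalars K := by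
  have hxJ (i) : x i ∈ Ideal.span (Set.range x) := Ideal.subset_span ⟨i, rfl⟩
  refine le_antisymm (fun a ha => ?_) (sup_le (Submodule.span_le.2 ?_) fun a ha => ?_)
  · rw [← Submodule.ker_mkQ (_ ⊔ _), LinearMap.mem_ker]
    refine eq_zero_of_forall_prod_pow_eq_zero hx _ (d := 1) (fun γ hγ => ?_)
      ((pow_one (Ideal.span (Set.range x))).symm ▸ ha)
    rw [← LinearMap.mem_ker, Submodule.ker_mkQ]
    obtain hγ | hγ := hγ.eq_or_lt
    · obtain ⟨i, rfl⟩ := exists_eq_single_of_degree_eq_one hγ.symm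
      rw [prod_pow_single]
      exact Submodule.mem_sup_left (Submodule.subset_span ⟨i, rfl⟩)
    · exact Submodule.mem_sup_right (Ideal.pow_le_pow_right hγ (prod_pow_mem_pow_degree hxJ γ))
  · rintro _ ⟨i, rfl⟩
    exact hxJ i
  · exact Ideal.pow_le_self two_ne_zero ha

theorem span_range_eq_maximalIdeal [IsLocalRing A] {N : ℕ}
    (hN : Ideal.span (Set.range x) ^ N = ⊥) :
    Ideal.span (Set.range x) = IsLocalRing.maximalIdeal A := by
  have hle : Ideal.span (Set.range x) ≤ IsLocalRing.maximalIdeal A :=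
    Ideal.IsPrime.le_of_pow_le (hN.trans_le bot_le)
  refine hle.antisymm fun a ha => ?_
  obtain ⟨c, hc⟩ := exists_sub_algebraMap_mem_span_range hx a
  have hcM : algebraMap K A c ∈ IsLocalRing.maximalIdeal A :=
    (Submodule.sub_mem_iff_right _ ha).1 (hle hc)
  have hc0 : c = 0 := by
    by_contra hne
    exact hcM ((IsUnit.mk0 c hne).map (algebraMap K A))
  rwa [hc0, map_zero, sub_zero] at hc

end Monomials

section NormalForm

variable {K : Type*} [Field K] {m n : ℕ}

/-- The polynomial `F₃ + y_{n+1}² + ⋯ + y_m²`; the variables are indexed from `0`, so the squares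
are those of `X j` for `n ≤ j`. -/
noncomputable def normalForm (h : n ≤ m) (F3 : MvPolynomial (Fin n) K) : MvPolynomial (Fin m) K :=
  MvPolynomial.rename (Fin.castLE h) F3 +
    ∑ j ∈ Finset.univ.filter (fun j : Fin m => n ≤ (j : ℕ)), MvPolynomial.X j ^ 2

theorem coeff_sum_X_sq {σ : Type*} [DecidableEq σ] (s : Finset σ) (i j : σ) :
    MvPolynomial.coeff (Finsupp.single i 1 + Finsupp.single j 1)
      (∑ k ∈ s, MvPolynomial.X k ^ 2 : MvPolynomial σ K) = if i = j ∧ i ∈ s then 1 else 0 := by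
  have hk (k : σ) : Finsupp.single k 2 = Finsupp.single i 1 + Finsupp.single j 1 ↔
      i = j ∧ i = k := by
    refine ⟨fun hk => ?_, ?_⟩
    · have hkk := DFunLike.congr_fun hk k
      simp only [Finsupp.add_apply, Finsupp.single_apply] at hkk
      grind
    · rintro ⟨rfl, rfl⟩
      rw [← Finsupp.single_add]
  simp only [MvPolynomial.coeff_sum, MvPolynomial.coeff_X_pow, hk]
  obtain rfl | hij := eq_or_ne i j <;> simp [*]

theorem coeff_sum_X_sq_of_degree_ne_two {σ : Type*} (s : Finset σ) {γ : σ →₀ ℕ}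
    (hγ : γ.degree ≠ 2) :
    MvPolynomial.coeff γ (∑ k ∈ s, MvPolynomial.X k ^ 2 : MvPolynomial σ K) = 0 :=
  (MvPolynomial.IsHomogeneous.sum s _ 2 fun k _ =>
    MvPolynomial.isHomogeneous_X_pow k 2).coeff_eq_zero hγ

theorem exists_eq_mapDomain_castLE (h : n ≤ m) {γ : Fin m →₀ ℕ}
    (hγ : ∀ i : Fin m, n ≤ i → γ i = 0) : ∃ β : Fin n →₀ ℕ, γ = β.mapDomain (Fin.castLE h) := by
  refine ⟨_, (Finsupp.mapDomain_comapDomain _ (Fin.castLE_injective h) γ fun i hi => ?_).symm⟩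
  have hin : (i : ℕ) < n := by
    by_contra hge
    exact Finsupp.mem_support_iff.1 hi (hγ i (not_lt.1 hge))
  exact ⟨⟨i, hin⟩, rfl⟩

theorem coeff_rename_castLE_eq_zero (h : n ≤ m) (F : MvPolynomial (Fin n) K) {γ : Fin m →₀ ℕ}
    {i : Fin m} (hi : n ≤ i) (hγ : γ i ≠ 0) :
    MvPolynomial.coeff γ (MvPolynomial.rename (Fin.castLE h) F) = 0 := by
  refine MvPolynomial.coeff_rename_eq_zero _ _ _ fun β hβ => absurd ?_ hγ
  rw [← hβ]
  refine Finsupp.mapDomain_of_notMem_range β i ?_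
  rintro ⟨j, rfl⟩
  exact j.isLt.not_ge hi

variable {h : n ≤ m} {F3 : MvPolynomial (Fin n) K}

theorem coeff_normalForm_eq_zero (hF3 : F3.IsHomogeneous 3) {γ : Fin m →₀ ℕ}
    (h2 : γ.degree ≠ 2) (h3 : γ.degree ≠ 3) : MvPolynomial.coeff γ (normalForm h F3) = 0 := by
  rw [normalForm, MvPolynomial.coeff_add, coeff_sum_X_sq_of_degree_ne_two _ h2,
    (hF3.rename_isHomogeneous).coeff_eq_zero h3, add_zero]

theorem coeff_normalForm_eq_zero_of_apply_ne_zero {γ : Fin m →₀ ℕ} (h2 : γ.degree ≠ 2) {i : Fin m}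
    (hi : n ≤ i) (hγ : γ i ≠ 0) : MvPolynomial.coeff γ (normalForm h F3) = 0 := by
  rw [normalForm, MvPolynomial.coeff_add, coeff_sum_X_sq_of_degree_ne_two _ h2,
    coeff_rename_castLE_eq_zero h F3 hi hγ, add_zero]

theorem coeff_normalForm_mapDomain {β : Fin n →₀ ℕ} (hβ : β.degree ≠ 2) :
    MvPolynomial.coeff (β.mapDomain (Fin.castLE h)) (normalForm h F3) =
      MvPolynomial.coeff β F3 := by
  rw [normalForm, MvPolynomial.coeff_add,
    MvPolynomial.coeff_rename_mapDomain _ (Fin.castLE_injective h),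
    coeff_sum_X_sq_of_degree_ne_two _ (by rwa [Finsupp.degree_mapDomain]), add_zero]

theorem coeff_normalForm_single_add_single (hF3 : F3.IsHomogeneous 3) (i j : Fin m) :
    MvPolynomial.coeff (Finsupp.single i 1 + Finsupp.single j 1) (normalForm h F3) =
      if i = j ∧ n ≤ i then 1 else 0 := by
  rw [normalForm, MvPolynomial.coeff_add, hF3.rename_isHomogeneous.coeff_eq_zero, zero_add,
    coeff_sum_X_sq]
  · simp
  · simp [map_add]

end NormalForm

section CubicFrame

variable {K A : Type*} [Field K] [CommRing A] [Algebra K A] {m n : ℕ}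

/-- Coordinates on `A` adapted to the normal form: generators `x` and a dual socle generator `φ`
with the values on monomials prescribed by `F₃ + y_{n+1}² + ⋯ + y_m²` for some cubic form `F₃` in
`y_1, …, y_n`, which is left free. The value `2 = 2!` comes from the differentiation action. -/
structure IsCubicFrame (n : ℕ) (x : Fin m → A) (φ : A →ₗ[K] K) : Prop where
  surjective : Function.Surjective (MvPolynomial.aeval (R := K) x)
  nondegenerate : (mulForm φ).Nondegenerate
  apply_one : φ 1 = 0
  apply_gen (i : Fin m) : φ (x i) = 0
  apply_gen_mul_gen (i j : Fin m) : φ (x i * x j) = if i = j ∧ n ≤ i then 2 else 0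
  mem_annihilator (i : Fin m) : n ≤ i → x i ∈ (Ideal.span (Set.range x) ^ 2).annihilator
  pow_four : Ideal.span (Set.range x) ^ 4 = ⊥

variable {x : Fin m → A} {φ : A →ₗ[K] K}

theorem prod_pow_mapDomain {σ τ : Type*} {f : σ → τ} (hf : Function.Injective f) (x : τ → A)
    (β : σ →₀ ℕ) : ((β.mapDomain f).prod fun i k => x i ^ k) = β.prod fun i k => x (f i) ^ k :=
  Finsupp.prod_mapDomain_index_inj (h := fun i k => x i ^ k) hf

theorem IsMacaulayPresentation.isCubicFrame {h : n ≤ m} {F3 : MvPolynomial (Fin n) K}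
    (hF3 : F3.IsHomogeneous 3) (hx : IsMacaulayPresentation (normalForm h F3) x φ) :
    IsCubicFrame n x φ where
  surjective := hx.surjective
  nondegenerate := hx.nondegenerate
  apply_one := by
    have h0 := hx.apply_monomial 0
    rwa [Finsupp.prod_zero_index, coeff_normalForm_eq_zero hF3 (by simp) (by simp),
      mul_zero] at h0
  apply_gen i := by
    have h1 := hx.apply_monomial (Finsupp.single i 1)
    rwa [prod_pow_single, coeff_normalForm_eq_zero hF3 (by simp) (by simp), mul_zero] at h1
  apply_gen_mul_gen i j := by
    have h2 := hx.apply_monomial (Finsupp.single i 1 + Finsupp.single j 1)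
    rw [prod_pow_add, prod_pow_single, prod_pow_single,
      coeff_normalForm_single_add_single hF3] at h2
    rw [h2]
    split_ifs with hij
    · rw [← hij.1, ← Finsupp.single_add, multiFactorial_single]
      norm_num
    · exact mul_zero _
  mem_annihilator i hi := by
    refine (mem_annihilator_span_range_pow_iff hx.surjective hx.nondegenerate).2 fun γ hγ => ?_
    have h3 := hx.apply_monomial (Finsupp.single i 1 + γ)
    rwa [prod_pow_add, prod_pow_single, coeff_normalForm_eq_zero_of_apply_ne_zero _ hi, mul_zero]
      at h3
    · simp
    · rw [map_add, Finsupp.degree_single]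
      omega
  pow_four := by
    refine (span_range_pow_eq_bot_iff hx.surjective hx.nondegenerate).2 fun γ hγ => ?_
    rw [hx.apply_monomial, coeff_normalForm_eq_zero hF3 (by omega) (by omega), mul_zero]

namespace IsCubicFrame

variable (hx : IsCubicFrame n x φ)
include hx

theorem prod_pow_eq_zero_of_four_le_degree {γ : Fin m →₀ ℕ} (hγ : 4 ≤ γ.degree) :
    (γ.prod fun i k => x i ^ k) = 0 := by
  rw [← Ideal.mem_bot, ← hx.pow_four]
  exact Ideal.pow_le_pow_right hγ
    (prod_pow_mem_pow_degree (fun i => Ideal.subset_span (Set.mem_range_self i)) γ)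

theorem prod_pow_eq_zero_of_apply_ne_zero {γ : Fin m →₀ ℕ} (hγ : 3 ≤ γ.degree) {i : Fin m}
    (hi : n ≤ i) (hγi : γ i ≠ 0) : (γ.prod fun i k => x i ^ k) = 0 := by
  obtain ⟨δ, rfl⟩ := exists_eq_add_single_of_apply_ne_zero hγi
  rw [map_add, Finsupp.degree_single] at hγ
  rw [prod_pow_add, prod_pow_single, mul_comm, ← smul_eq_mul]
  exact Submodule.mem_annihilator.1 (hx.mem_annihilator i hi) _ <|
    Ideal.pow_le_pow_right (Nat.le_of_succ_le_succ hγ)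
      (prod_pow_mem_pow_degree (fun i => Ideal.subset_span (Set.mem_range_self i)) δ)

theorem isMacaulayPresentation (h : n ≤ m) {F3 : MvPolynomial (Fin n) K}
    (hF3 : F3.IsHomogeneous 3)
    (hφ : ∀ β : Fin n →₀ ℕ, β.degree = 3 →
      φ (β.prod fun i k => x (Fin.castLE h i) ^ k) = multiFactorial β * MvPolynomial.coeff β F3) :
    IsMacaulayPresentation (normalForm h F3) x φ where
  surjective := hx.surjective
  nondegenerate := hx.nondegenerate
  apply_monomial γ := by
    obtain h4 | h4 := le_or_gt 4 γ.degree
    · rw [hx.prod_pow_eq_zero_of_four_le_degree h4,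
        coeff_normalForm_eq_zero hF3 (by omega) (by omega), mul_zero, map_zero]
    interval_cases hd : γ.degree
    · rw [coeff_normalForm_eq_zero hF3 (by omega) (by omega), (Finsupp.degree_eq_zero_iff γ).1 hd,
        Finsupp.prod_zero_index, hx.apply_one, mul_zero]
    · rw [coeff_normalForm_eq_zero hF3 (by omega) (by omega)]
      obtain ⟨i, rfl⟩ := exists_eq_single_of_degree_eq_one hd
      rw [prod_pow_single, hx.apply_gen, mul_zero]
    · obtain ⟨i, j, rfl⟩ := exists_eq_single_add_single_of_degree_eq_two hd
      rw [prod_pow_add, prod_pow_single, prod_pow_single, hx.apply_gen_mul_gen,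
        coeff_normalForm_single_add_single hF3]
      split_ifs with hij
      · rw [← hij.1, ← Finsupp.single_add, multiFactorial_single]
        norm_num
      · rw [mul_zero]
    · by_cases hγ : ∀ i : Fin m, n ≤ i → γ i = 0
      · obtain ⟨β, rfl⟩ := exists_eq_mapDomain_castLE h hγ
        rw [Finsupp.degree_mapDomain] at hd
        rw [prod_pow_mapDomain (Fin.castLE_injective h), hφ β hd,
          multiFactorial_mapDomain (Fin.castLE_injective h),
          coeff_normalForm_mapDomain (by omega)]
      · push Not at hγ
        obtain ⟨i, hi, hγi⟩ := hγ
        rw [hx.prod_pow_eq_zero_of_apply_ne_zero hd.ge hi hγi,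
          coeff_normalForm_eq_zero_of_apply_ne_zero (by omega) hi hγi, mul_zero, map_zero]

end IsCubicFrame

theorem exists_isHomogeneous_coeff_eq {σ : Type*} [Finite σ] (d : ℕ) (c : (σ →₀ ℕ) → K) :
    ∃ F : MvPolynomial σ K, F.IsHomogeneous d ∧
      ∀ β : σ →₀ ℕ, β.degree = d → MvPolynomial.coeff β F = c β := by
  classical
  have := Fintype.ofFinite σ
  have hmem (β : σ →₀ ℕ) : β ∈ Finset.finsuppAntidiag Finset.univ d ↔ β.degree = d := by
    simp [Finset.mem_finsuppAntidiag, Finsupp.degree_eq_sum]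
  refine ⟨∑ β ∈ Finset.finsuppAntidiag Finset.univ d, MvPolynomial.monomial β (c β),
    MvPolynomial.IsHomogeneous.sum _ _ _ fun β hβ =>
      MvPolynomial.isHomogeneous_monomial _ ((hmem β).1 hβ), fun β hβ => ?_⟩
  simp [MvPolynomial.coeff_sum, MvPolynomial.coeff_monomial, hmem, hβ]

theorem linForm_mem_annR_iff [CharZero K] {F : MvPolynomial (Fin n) K} {d : ℕ}
    (hF : F.IsHomogeneous (d + 1)) {l : Fin n → K} :
    linForm l ∈ annR F ↔ ∀ β : Fin n →₀ ℕ, β.degree = d →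
      ∑ i, l i * (multiFactorial (β + Finsupp.single i 1) *
        MvPolynomial.coeff (β + Finsupp.single i 1) F) = 0 := by
  have hmon (β : Fin n →₀ ℕ) : apolarFunctional F (MvPowerSeries.monomial β 1 * linForm l) =
      ∑ i, l i * (multiFactorial (β + Finsupp.single i 1) *
        MvPolynomial.coeff (β + Finsupp.single i 1) F) := by
    rw [linForm, Finset.mul_sum, map_sum]
    refine Finset.sum_congr rfl fun i _ => ?_
    rw [MvPowerSeries.monomial_mul_monomial, one_mul, ← apolarFunctional_monomial, ← smul_eq_mul,
      ← map_smul, ← map_smul, smul_eq_mul, mul_one]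
  rw [mem_annR_iff_forall_polynomial]
  refine ⟨fun h β _ => ?_, fun h u => ?_⟩
  · rw [← hmon, ← MvPolynomial.coe_monomial, h]
  · have hvanish (β : Fin n →₀ ℕ) :
        apolarFunctional F (MvPowerSeries.monomial β 1 * linForm l) = 0 := by
      rw [hmon]
      by_cases hβ : β.degree = d
      · exact h β hβ
      · refine Finset.sum_eq_zero fun i _ => ?_
        rw [hF.coeff_eq_zero (by simpa [map_add] using hβ), mul_zero, mul_zero]
    induction u using MvPolynomial.induction_on' with
    | monomial β c =>
      have hc : MvPowerSeries.monomial β c = c • MvPowerSeries.monomial β 1 := by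
        rw [← map_smul, smul_eq_mul, mul_one]
      rw [MvPolynomial.coe_monomial, hc, smul_mul_assoc, map_smul, hvanish, smul_zero]
    | add p q hp hq => rw [MvPolynomial.coe_add, add_mul, map_add, hp, hq, add_zero]

theorem IsCubicFrame.sum_smul_mem_annihilator_iff (hx : IsCubicFrame n x φ) (h : n ≤ m)
    {l : Fin n → K} :
    ∑ i, l i • x (Fin.castLE h i) ∈ (Ideal.span (Set.range x) ^ 2).annihilator ↔
      ∀ β : Fin n →₀ ℕ, β.degree = 2 →
        ∑ i, l i * φ ((β + Finsupp.single i 1).prod fun i k => x (Fin.castLE h i) ^ k) = 0 := by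
  have hsum (γ : Fin m →₀ ℕ) : φ ((∑ i, l i • x (Fin.castLE h i)) * γ.prod fun i k => x i ^ k) =
      ∑ i, l i * φ ((γ + Finsupp.single (Fin.castLE h i) 1).prod fun i k => x i ^ k) := by
    rw [Finset.sum_mul, map_sum]
    refine Finset.sum_congr rfl fun i _ => ?_
    rw [smul_mul_assoc, map_smul, smul_eq_mul, prod_pow_add, prod_pow_single, mul_comm (x _)]
  have hcast (β : Fin n →₀ ℕ) (i : Fin n) :
      ((β.mapDomain (Fin.castLE h) + Finsupp.single (Fin.castLE h i) 1).prod fun i k => x i ^ k) =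
        (β + Finsupp.single i 1).prod fun i k => x (Fin.castLE h i) ^ k := by
    rw [← prod_pow_mapDomain (Fin.castLE_injective h), Finsupp.mapDomain_add,
      Finsupp.mapDomain_single]
  rw [mem_annihilator_span_range_pow_iff hx.surjective hx.nondegenerate]
  simp only [hsum]
  refine ⟨fun H β hβ => ?_, fun H γ hγ => ?_⟩
  · simpa only [hcast] using H (β.mapDomain (Fin.castLE h)) (by rw [Finsupp.degree_mapDomain, hβ])
  by_cases hγn : ∀ i : Fin m, n ≤ i → γ i = 0
  · obtain ⟨β, rfl⟩ := exists_eq_mapDomain_castLE h hγn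
    rw [Finsupp.degree_mapDomain] at hγ
    obtain hβ | hβ := hγ.eq_or_lt
    · simpa only [hcast] using H β hβ.symm
    · refine Finset.sum_eq_zero fun i _ => ?_
      rw [hx.prod_pow_eq_zero_of_four_le_degree, map_zero, mul_zero]
      rw [map_add, Finsupp.degree_single, Finsupp.degree_mapDomain]
      omega
  · push Not at hγn
    obtain ⟨j, hj, hγj⟩ := hγn
    refine Finset.sum_eq_zero fun i _ => ?_
    rw [hx.prod_pow_eq_zero_of_apply_ne_zero _ hj, map_zero, mul_zero]
    · simp [hγj]
    · rw [map_add, Finsupp.degree_single]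
      omega

theorem IsCubicFrame.sq_le_annihilator_sq (hx : IsCubicFrame n x φ) :
    Ideal.span (Set.range x) ^ 2 ≤ (Ideal.span (Set.range x) ^ 2).annihilator :=
  Submodule.le_annihilator_iff.2 (by rw [smul_eq_mul, ← pow_add, hx.pow_four])

theorem IsCubicFrame.linearIndependent_mod_sq [NeZero (2 : K)] (hx : IsCubicFrame n x φ)
    (h : n ≤ m)
    (hli : ∀ l : Fin n → K,
      ∑ i, l i • x (Fin.castLE h i) ∈ (Ideal.span (Set.range x) ^ 2).annihilator → l = 0)
    {c : Fin m → K}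
    (hc : ∑ i, c i • x i ∈ Ideal.span (Set.range x) ^ 2) : c = 0 := by
  have hc_ge (j : Fin m) (hj : n ≤ j) : c j = 0 := by
    have h0 : φ (x j * ∑ i, c i • x i) = 0 := by
      rw [← smul_eq_mul, Submodule.mem_annihilator.1 (hx.mem_annihilator j hj) _ hc, map_zero]
    rw [Finset.mul_sum, map_sum, Finset.sum_eq_single j, mul_smul_comm, map_smul,
      hx.apply_gen_mul_gen, if_pos ⟨rfl, hj⟩, smul_eq_mul] at h0
    · exact (mul_eq_zero.1 h0).resolve_right two_ne_zero
    · intro i _ hij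
      rw [mul_smul_comm, map_smul, hx.apply_gen_mul_gen, if_neg fun hji => hij hji.1.symm,
        smul_zero]
    · exact fun hj' => absurd (Finset.mem_univ j) hj'
  have hsum : ∑ i, c (Fin.castLE h i) • x (Fin.castLE h i) = ∑ i, c i • x i := by
    refine Fintype.sum_of_injective _ (Fin.castLE_injective h) _ _ (fun j hj => ?_) fun _ => rfl
    rw [hc_ge j (not_lt.1 fun hlt => hj ⟨⟨j, hlt⟩, rfl⟩), zero_smul]
  have hc_lt := hli (fun i => c (Fin.castLE h i)) (hsum ▸ hx.sq_le_annihilator_sq hc)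
  funext j
  obtain hj | hj := lt_or_ge (j : ℕ) n
  · exact congrFun hc_lt ⟨j, hj⟩
  · exact hc_ge j hj

theorem IsCubicFrame.span_sup_annihilator_sq [IsLocalRing A] (hx : IsCubicFrame n x φ) (h : n ≤ m)
    (htop : (Ideal.span (Set.range x) ^ 2).annihilator ≠ ⊤) :
    Submodule.span K (Set.range fun i => x (Fin.castLE h i)) ⊔
        (Ideal.span (Set.range x) ^ 2).annihilator.restrictScalars K =
      (Ideal.span (Set.range x)).restrictScalars K := by
  have hM := span_range_eq_maximalIdeal hx.surjective hx.pow_four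
  refine le_antisymm (sup_le (Submodule.span_le.2 ?_) ?_) ?_
  · rintro _ ⟨i, rfl⟩
    exact Ideal.subset_span (Set.mem_range_self _)
  · exact fun w hw => hM ▸ IsLocalRing.le_maximalIdeal htop hw
  · rw [span_range_eq_span_sup_sq hx.surjective]
    refine sup_le (Submodule.span_le.2 ?_) fun a ha =>
      Submodule.mem_sup_right (hx.sq_le_annihilator_sq ha)
    rintro _ ⟨j, rfl⟩
    obtain hj | hj := lt_or_ge (j : ℕ) n
    · exact Submodule.mem_sup_left (Submodule.subset_span ⟨⟨j, hj⟩, rfl⟩)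
    · exact Submodule.mem_sup_right (hx.mem_annihilator j hj)

theorem IsCubicFrame.linForm_mem_annR_iff [CharZero K] (hx : IsCubicFrame n x φ) (h : n ≤ m)
    {F3 : MvPolynomial (Fin n) K} (hF3 : F3.IsHomogeneous 3)
    (hφ : ∀ β : Fin n →₀ ℕ, β.degree = 3 →
      φ (β.prod fun i k => x (Fin.castLE h i) ^ k) = multiFactorial β * MvPolynomial.coeff β F3)
    {l : Fin n → K} :
    linForm l ∈ annR F3 ↔
      ∑ i, l i • x (Fin.castLE h i) ∈ (Ideal.span (Set.range x) ^ 2).annihilator := by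
  rw [_root_.linForm_mem_annR_iff hF3, hx.sum_smul_mem_annihilator_iff h]
  refine forall₂_congr fun β hβ => ?_
  have hβi (i : Fin n) := hφ (β + Finsupp.single i 1) (by rw [map_add, hβ, Finsupp.degree_single])
  simp only [hβi]

theorem exists_isMacaulayPresentation_normalForm_iff [CharZero K] (h : n ≤ m) :
    (∃ F3 : MvPolynomial (Fin n) K, F3.IsHomogeneous 3 ∧ nondegenerate F3 ∧
      ∃ (x : Fin m → A) (φ : A →ₗ[K] K), IsMacaulayPresentation (normalForm h F3) x φ) ↔
    ∃ (x : Fin m → A) (φ : A →ₗ[K] K), IsCubicFrame n x φ ∧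
      ∀ l : Fin n → K, ∑ i, l i • x (Fin.castLE h i) ∈ (Ideal.span (Set.range x) ^ 2).annihilator →
        l = 0 := by
  constructor
  · rintro ⟨F3, hF3, hnd, x, φ, hx⟩
    refine ⟨x, φ, hx.isCubicFrame hF3, fun l hl => hnd l ?_⟩
    refine ((hx.isCubicFrame hF3).linForm_mem_annR_iff h hF3 fun β hβ => ?_).2 hl
    rw [← prod_pow_mapDomain (Fin.castLE_injective h), hx.apply_monomial,
      multiFactorial_mapDomain (Fin.castLE_injective h), coeff_normalForm_mapDomain (by omega)]
  · rintro ⟨x, φ, hx, hli⟩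
    obtain ⟨F3, hF3, hcoeff⟩ := exists_isHomogeneous_coeff_eq 3 fun β : Fin n →₀ ℕ =>
      φ (β.prod fun i k => x (Fin.castLE h i) ^ k) / multiFactorial β
    have hφ (β : Fin n →₀ ℕ) (hβ : β.degree = 3) :
        φ (β.prod fun i k => x (Fin.castLE h i) ^ k) =
          multiFactorial β * MvPolynomial.coeff β F3 := by
      rw [hcoeff β hβ, mul_div_cancel₀ _ (Nat.cast_ne_zero.2 (multiFactorial_ne_zero β))]
    exact ⟨F3, hF3, fun l hl => hli l ((hx.linForm_mem_annR_iff h hF3 hφ).1 hl), x, φ,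
      hx.isMacaulayPresentation h hF3 hφ⟩

end CubicFrame

section HilbertFunction

open IsLocalRing
open Module (finrank)

theorem finiteDimensional_of_span_range_pow_eq_bot {σ K A : Type*} [Finite σ] [Field K]
    [CommRing A] [Algebra K A] {x : σ → A}
    (hx : Function.Surjective (MvPolynomial.aeval (R := K) x)) {N : ℕ}
    (hN : Ideal.span (Set.range x) ^ N = ⊥) : FiniteDimensional K A := by
  have : Algebra.FiniteType K A := Algebra.FiniteType.of_surjective _ hx
  have : Algebra.IsIntegral K A := ⟨fun a => by
    obtain ⟨c, hc⟩ := exists_sub_algebraMap_mem_span_range hx a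
    have hpow : (a - algebraMap K A c) ^ (N + 1) = 0 := by
      rw [← Ideal.mem_bot, ← hN]
      exact Ideal.pow_le_pow_right N.le_succ (Ideal.pow_mem_pow hc _)
    have h_integral : IsIntegral K (a - algebraMap K A c) :=
      IsIntegral.of_pow N.succ_pos (hpow ▸ isIntegral_zero)
    simpa only [sub_add_cancel] using h_integral.add (isIntegral_algebraMap (x := c))⟩
  exact Algebra.IsIntegral.finite

variable {K A : Type*} [Field K] [CommRing A] [IsLocalRing A] [Algebra K A] {m n : ℕ}

/-- The Artinian Gorenstein local `K`-algebras with Hilbert function `{1, m, n, 1}`, described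
through the dimensions of the socle and of the powers of the maximal ideal. -/
structure IsGorensteinOneMNOne (K A : Type*) [Field K] [CommRing A] [IsLocalRing A] [Algebra K A]
    (m n : ℕ) : Prop where
  finiteDimensional : FiniteDimensional K A
  residueFieldIsK : residueFieldIsK K A
  finrank_socle : finrank K (maximalIdeal A).annihilator = 1
  finrank_maximalIdeal : finrank K (maximalIdeal A) = n + m + 1
  finrank_sq : finrank K ↥(maximalIdeal A ^ 2) = n + 1
  finrank_cube : finrank K ↥(maximalIdeal A ^ 3) = 1
  pow_four : maximalIdeal A ^ 4 = ⊥

theorem finrank_maximalIdeal_add_one [FiniteDimensional K A] (hres : residueFieldIsK K A) :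
    finrank K (maximalIdeal A) + 1 = finrank K A :=
  finrank_add_one_of_forall_sub_algebraMap_mem Ideal.IsPrime.ne_top' (residueFieldIsK_iff.1 hres)

theorem isGorensteinOneMNOne_iff :
    IsGorensteinOneMNOne K A m n ↔
      IsArtinianRing A ∧ residueFieldIsK K A ∧ socDimLoc K A = 1 ∧
        hilbLoc K A 0 = 1 ∧ hilbLoc K A 1 = m ∧ hilbLoc K A 2 = n ∧ hilbLoc K A 3 = 1 ∧
        maximalIdeal A ^ 4 = ⊥ := by
  have finrank_zero : finrank K ↥(maximalIdeal A ^ 0) = finrank K A := by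
    rw [pow_zero, Ideal.one_eq_top]; exact finrank_top K A
  have finrank_one : finrank K ↥(maximalIdeal A ^ 1) = finrank K (maximalIdeal A) := by
    rw [pow_one]
  have finrank_four (h : maximalIdeal A ^ 4 = ⊥) : finrank K ↥(maximalIdeal A ^ 4) = 0 := by
    rw [h]; exact finrank_bot K A
  rw [socDimLoc_eq_finrank_annihilator]
  constructor
  · intro h
    have := h.finiteDimensional
    have hA := finrank_maximalIdeal_add_one h.residueFieldIsK
    simp only [hilbLoc_eq_finrank_sub, finrank_zero, finrank_one, Nat.reduceAdd,
      h.finrank_maximalIdeal, h.finrank_sq, h.finrank_cube, finrank_four h.pow_four] at hA ⊢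
    exact ⟨isArtinian_of_tower K inferInstance, h.residueFieldIsK, h.finrank_socle, by omega,
      by omega, by omega, trivial, h.pow_four⟩
  · rintro ⟨-, hres, hsoc, h0, h1, h2, h3, h4⟩
    have hfin : FiniteDimensional K A := by
      have hpos : 0 < finrank K (A ⧸ maximalIdeal A ^ 4) :=
        Nat.pos_of_ne_zero fun h => by simp [hilbLoc, h] at h3
      have : FiniteDimensional K (A ⧸ maximalIdeal A ^ 4) := Module.finite_of_finrank_pos hpos
      rw [h4] at this
      exact Module.Finite.equiv (AlgEquiv.quotientBot K A).toLinearEquiv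
    have h12 := finrank_ideal_mono (K := K)
      (Ideal.pow_le_pow_right (Nat.le_succ 1) : maximalIdeal A ^ 2 ≤ _)
    have h23 := finrank_ideal_mono (K := K)
      (Ideal.pow_le_pow_right (Nat.le_succ 2) : maximalIdeal A ^ 3 ≤ _)
    simp only [hilbLoc_eq_finrank_sub, finrank_zero, finrank_one, Nat.reduceAdd,
      finrank_four h4, tsub_zero] at h0 h1 h2 h3 h12 h23
    exact ⟨hfin, hres, hsoc, by omega, by omega, h3, h4⟩

namespace IsCubicFrame

variable {x : Fin m → A} {φ : A →ₗ[K] K} (hx : IsCubicFrame n x φ) (h : n ≤ m)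
  (hli : ∀ l : Fin n → K,
    ∑ i, l i • x (Fin.castLE h i) ∈ (Ideal.span (Set.range x) ^ 2).annihilator → l = 0)
include hx hli

theorem finrank_maximalIdeal_eq_add_finrank_sq [NeZero (2 : K)] :
    finrank K (maximalIdeal A) = m + finrank K ↥(maximalIdeal A ^ 2) := by
  have := finiteDimensional_of_span_range_pow_eq_bot hx.surjective hx.pow_four
  have hdim := finrank_sup_of_linearIndependent_mod x
    ((Ideal.span (Set.range x) ^ 2).restrictScalars K) fun _ hc =>
      hx.linearIndependent_mod_sq h hli ((Submodule.restrictScalars_mem K _ _).1 hc)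
  rwa [← span_range_eq_span_sup_sq hx.surjective, Fintype.card_fin,
    span_range_eq_maximalIdeal hx.surjective hx.pow_four] at hdim

theorem finrank_maximalIdeal_eq_add_finrank_annihilator_sq
    (htop : (Ideal.span (Set.range x) ^ 2).annihilator ≠ ⊤) :
    finrank K (maximalIdeal A) = n + finrank K (maximalIdeal A ^ 2).annihilator := by
  have := finiteDimensional_of_span_range_pow_eq_bot hx.surjective hx.pow_four
  have hdim := finrank_sup_of_linearIndependent_mod _
    ((Ideal.span (Set.range x) ^ 2).annihilator.restrictScalars K) hli
  rwa [hx.span_sup_annihilator_sq h htop, Fintype.card_fin,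
    span_range_eq_maximalIdeal hx.surjective hx.pow_four] at hdim

theorem isGorensteinOneMNOne [NeZero (2 : K)] (hn : 1 ≤ n) : IsGorensteinOneMNOne K A m n := by
  have hM := span_range_eq_maximalIdeal hx.surjective hx.pow_four
  have hfin := finiteDimensional_of_span_range_pow_eq_bot hx.surjective hx.pow_four
  have hres : residueFieldIsK K A :=
    residueFieldIsK_iff.2 (hM ▸ exists_sub_algebraMap_mem_span_range hx.surjective)
  have hpow : maximalIdeal A ^ 4 = ⊥ := hM ▸ hx.pow_four
  have hnot_mem : x (Fin.castLE h ⟨0, hn⟩) ∉ (Ideal.span (Set.range x) ^ 2).annihilator :=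
    fun hmem => one_ne_zero (α := K) <| by
      simpa using congrFun (hli (Pi.single ⟨0, hn⟩ 1) (by simpa [Pi.single_apply] using hmem))
        ⟨0, hn⟩
  have hM_A := finrank_maximalIdeal_add_one hres
  have hM_sq := hx.finrank_maximalIdeal_eq_add_finrank_sq h hli
  have hM_ann := hx.finrank_maximalIdeal_eq_add_finrank_annihilator_sq h hli
    fun htop => hnot_mem (htop ▸ Submodule.mem_top)
  have hann_sq := finrank_annihilator hx.nondegenerate (maximalIdeal A ^ 2)
  have hsoc := finrank_annihilator hx.nondegenerate (maximalIdeal A)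
  have hcube_le : finrank K ↥(maximalIdeal A ^ 3) ≤ finrank K (maximalIdeal A).annihilator :=
    finrank_ideal_mono (Submodule.le_annihilator_iff.2 (by rw [smul_eq_mul, ← pow_succ, hpow]))
  have hcube_ne : finrank K ↥(maximalIdeal A ^ 3) ≠ 0 := fun h0 => hnot_mem <| by
    have hbot : maximalIdeal A ^ 3 = ⊥ :=
      (Submodule.restrictScalars_eq_bot_iff K A A).1 (Submodule.finrank_eq_zero.1 h0)
    have hle : maximalIdeal A ≤ (maximalIdeal A ^ 2).annihilator :=
      Submodule.le_annihilator_iff.2 (by rw [smul_eq_mul, ← pow_succ', hbot])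
    exact hM ▸ hle (hM ▸ Ideal.subset_span (Set.mem_range_self _))
  exact ⟨hfin, hres, by omega, by omega, by omega, by omega, hpow⟩

end IsCubicFrame

end HilbertFunction

section WittGenerators

open IsLocalRing
open Module (finrank)

variable {K A : Type*} [Field K] [CommRing A] [IsLocalRing A] [Algebra K A] {m n : ℕ}

namespace IsGorensteinOneMNOne

variable (hA : IsGorensteinOneMNOne K A m n)
include hA

theorem cube_eq_annihilator : maximalIdeal A ^ 3 = (maximalIdeal A).annihilator := by
  have := hA.finiteDimensional
  have hle : maximalIdeal A ^ 3 ≤ (maximalIdeal A).annihilator :=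
    Submodule.le_annihilator_iff.2 (by rw [smul_eq_mul, ← pow_succ, hA.pow_four])
  refine Submodule.restrictScalars_injective K A A <|
    Submodule.eq_of_le_of_finrank_eq hle (hA.finrank_cube.trans hA.finrank_socle.symm)

theorem exists_socle_generator :
    ∃ s ∈ maximalIdeal A ^ 3, s ≠ 0 ∧ ∀ a ∈ (maximalIdeal A).annihilator, ∃ c : K, c • s = a := by
  obtain ⟨⟨s, hs⟩, hs0, hspan⟩ := finrank_eq_one_iff'.1 hA.finrank_socle
  refine ⟨s, hA.cube_eq_annihilator ▸ hs, fun h => hs0 (Subtype.ext h), fun a ha => ?_⟩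
  obtain ⟨c, hc⟩ := hspan ⟨a, ha⟩
  exact ⟨c, congrArg Subtype.val hc⟩

theorem exists_functional :
    ∃ φ : A →ₗ[K] K, φ 1 = 0 ∧ ∀ a ∈ (maximalIdeal A).annihilator, φ a = 0 → a = 0 := by
  obtain ⟨s, hs, hs0, hspan⟩ := hA.exists_socle_generator
  have hs_notMem : s ∉ Submodule.span K {(1 : A)} := fun hmem => by
    obtain ⟨c, rfl⟩ := Submodule.mem_span_singleton.1 hmem
    have hc : c ≠ 0 := fun hc => hs0 (by rw [hc, zero_smul])
    rw [← Algebra.algebraMap_eq_smul_one] at hs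
    exact (maximalIdeal.isMaximal A).ne_top <| Ideal.eq_top_of_isUnit_mem _
      (Ideal.pow_le_self three_ne_zero hs) ((IsUnit.mk0 c hc).map (algebraMap K A))
  obtain ⟨φ, hφs, hφ⟩ := Submodule.exists_dual_map_eq_bot_of_notMem hs_notMem inferInstance
  refine ⟨φ, (Submodule.mem_bot K).1 <|
    hφ ▸ Submodule.mem_map_of_mem (Submodule.mem_span_singleton_self 1), fun a ha hφa => ?_⟩
  obtain ⟨c, rfl⟩ := hspan a ha
  rw [map_smul, smul_eq_mul, mul_eq_zero, or_iff_left hφs] at hφa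
  rw [hφa, zero_smul]

variable {φ : A →ₗ[K] K} (hφ : ∀ a ∈ (maximalIdeal A).annihilator, φ a = 0 → a = 0)
include hφ

theorem exists_mem_cube_apply_ne_zero : ∃ s ∈ maximalIdeal A ^ 3, φ s ≠ 0 := by
  obtain ⟨s, hs, hs0, -⟩ := hA.exists_socle_generator
  exact ⟨s, hs, fun h => hs0 (hφ s (hA.cube_eq_annihilator ▸ hs) h)⟩

theorem finrank_inf_ker_add_one {I : Ideal A} (hI : maximalIdeal A ^ 3 ≤ I) :
    finrank K ↥(I.restrictScalars K ⊓ LinearMap.ker φ) + 1 = finrank K I := by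
  have := hA.finiteDimensional
  obtain ⟨s, hs, hφs⟩ := hA.exists_mem_cube_apply_ne_zero hφ
  exact _root_.finrank_inf_ker_add_one (N := I.restrictScalars K) (hI hs) hφs

theorem le_inf_ker_sup_cube {I : Ideal A} (hI : maximalIdeal A ^ 3 ≤ I) :
    I.restrictScalars K ≤
      I.restrictScalars K ⊓ LinearMap.ker φ ⊔ (maximalIdeal A ^ 3).restrictScalars K := by
  obtain ⟨s, hs, hφs⟩ := hA.exists_mem_cube_apply_ne_zero hφ
  intro a ha
  have hcs : (φ a / φ s) • s ∈ (maximalIdeal A ^ 3).restrictScalars K := Submodule.smul_mem _ _ hs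
  refine Submodule.mem_sup.2 ⟨_, ⟨sub_mem ha (hI hcs), ?_⟩, _, hcs, sub_add_cancel _ _⟩
  rw [SetLike.mem_coe, LinearMap.mem_ker, map_sub, map_smul, smul_eq_mul,
    div_mul_cancel₀ _ hφs, sub_self]

theorem nondegenerate_restrict_mulForm : ((mulForm φ).restrict
    ((maximalIdeal A).restrictScalars K ⊓ LinearMap.ker φ)).Nondegenerate := by
  refine ((isSymm_mulForm φ).domRestrict _).isRefl.nondegenerate_iff_separatingLeft.2
    fun ⟨a, ha, hφa⟩ horth => ?_
  have hann : a ∈ (mulForm φ).orthogonal ((maximalIdeal A).restrictScalars K) := by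
    intro b hb
    obtain ⟨p, hp, s, hs, rfl⟩ := Submodule.mem_sup.1 <|
      hA.le_inf_ker_sup_cube hφ (Ideal.pow_le_self three_ne_zero) hb
    have hsa : s * a = 0 := Submodule.mem_annihilator.1
      (hA.cube_eq_annihilator.le hs) a ha
    have hpa : φ (p * a) = 0 := mul_comm a p ▸ horth ⟨p, hp⟩
    change φ ((p + s) * a) = 0
    rw [add_mul, hsa, add_zero, hpa]
  rw [orthogonal_mulForm (nondegenerate_mulForm_of_socle hA.pow_four hφ)] at hann
  exact Subtype.ext (hφ a hann hφa)

theorem exists_isotropic_basis :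
    ∃ e : Fin n → ↥((maximalIdeal A).restrictScalars K ⊓ LinearMap.ker φ),
      LinearIndependent K e ∧ (∀ i, (e i : A) ∈ maximalIdeal A ^ 2) ∧
      (maximalIdeal A ^ 2).restrictScalars K ≤
        Submodule.span K (Set.range fun i => (e i : A)) ⊔
          (maximalIdeal A ^ 3).restrictScalars K := by
  have := hA.finiteDimensional
  have hle_sq : maximalIdeal A ^ 3 ≤ maximalIdeal A ^ 2 := Ideal.pow_le_pow_right (by norm_num)
  have hle : (maximalIdeal A ^ 2).restrictScalars K ⊓ LinearMap.ker φ ≤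
      (maximalIdeal A).restrictScalars K ⊓ LinearMap.ker φ :=
    inf_le_inf_right _ (Ideal.pow_le_self two_ne_zero)
  have hdim : finrank K ↥((maximalIdeal A ^ 2).restrictScalars K ⊓ LinearMap.ker φ) = n :=
    Nat.add_right_cancel ((hA.finrank_inf_ker_add_one hφ hle_sq).trans hA.finrank_sq)
  let b := Module.finBasisOfFinrankEq K _ hdim
  refine ⟨Submodule.inclusion hle ∘ b, b.linearIndependent.map' _ (Submodule.ker_inclusion _ _ hle),
    fun i => (b i).2.1, (hA.le_inf_ker_sup_cube hφ hle_sq).trans (sup_le_sup_right (le_of_eq ?_) _)⟩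
  have hspan := congrArg (Submodule.map (Submodule.subtype _)) b.span_eq
  rw [Submodule.map_span, ← Set.range_comp, Submodule.map_subtype_top] at hspan
  exact hspan.symm

theorem exists_witt_generators [IsAlgClosed K] [NeZero (2 : K)] (h : n ≤ m) :
    ∃ (e : Fin n → A) (x : Fin m → A), (∀ i, e i ∈ maximalIdeal A ^ 2) ∧
      (maximalIdeal A ^ 2).restrictScalars K ≤
        Submodule.span K (Set.range e) ⊔ (maximalIdeal A ^ 3).restrictScalars K ∧
      (∀ j, x j ∈ maximalIdeal A) ∧ (∀ j, φ (x j) = 0) ∧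
      (∀ i j, φ (e i * x j) = if Fin.castLE h i = j then 1 else 0) ∧
      (∀ i j, φ (x i * x j) = if i = j ∧ n ≤ i then 2 else 0) ∧
      (maximalIdeal A).restrictScalars K ≤
        Submodule.span K (Set.range x) ⊔ (maximalIdeal A ^ 2).restrictScalars K := by
  have := hA.finiteDimensional
  have hle_one : maximalIdeal A ^ 3 ≤ maximalIdeal A := Ideal.pow_le_self three_ne_zero
  have hle_two : maximalIdeal A ^ 3 ≤ maximalIdeal A ^ 2 := Ideal.pow_le_pow_right (by norm_num)
  obtain ⟨e, he, he_sq, hspan⟩ := hA.exists_isotropic_basis hφ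
  have hee (i j) : φ (e i * e j) = 0 := by
    have hmem : (e i * e j : A) ∈ maximalIdeal A ^ 4 :=
      pow_add (maximalIdeal A) 2 2 ▸ Ideal.mul_mem_mul (he_sq i) (he_sq j)
    rw [hA.pow_four, Ideal.mem_bot] at hmem
    rw [hmem, map_zero]
  obtain ⟨x, hex, hxx, htop⟩ := exists_witt_complement ((isSymm_mulForm φ).domRestrict _)
    (hA.nondegenerate_restrict_mulForm hφ) two_ne_zero h (Nat.add_right_cancel <|
      (hA.finrank_inf_ker_add_one hφ hle_one).trans hA.finrank_maximalIdeal) he hee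
  refine ⟨fun i => e i, fun j => x j, he_sq, hspan, fun j => (x j).2.1, fun j => (x j).2.2, hex,
    hxx, (hA.le_inf_ker_sup_cube hφ hle_one).trans (sup_le ?_ fun a ha =>
      Submodule.mem_sup_right (hle_two ha))⟩
  have hmap := congrArg (Submodule.map (Submodule.subtype _)) htop
  rw [Submodule.map_sup, Submodule.map_span, Submodule.map_span, ← Set.range_comp,
    ← Set.range_comp, Submodule.map_subtype_top] at hmap
  refine hmap.ge.trans (sup_le (le_sup_of_le_right (Submodule.span_le.2 ?_)) le_sup_left)
  rintro _ ⟨i, rfl⟩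
  exact he_sq i

theorem mem_annihilator_sq {e : Fin n → A}
    (he : (maximalIdeal A ^ 2).restrictScalars K ≤
      Submodule.span K (Set.range e) ⊔ (maximalIdeal A ^ 3).restrictScalars K)
    {a : A} (ha : a ∈ maximalIdeal A) (hea : ∀ i, φ (e i * a) = 0) :
    a ∈ (maximalIdeal A ^ 2).annihilator := by
  suffices a ∈ (mulForm φ).orthogonal ((maximalIdeal A ^ 2).restrictScalars K) by
    rwa [orthogonal_mulForm (nondegenerate_mulForm_of_socle hA.pow_four hφ)] at this
  have hcube {s : A} (hs : s ∈ maximalIdeal A ^ 3) : s * a = 0 :=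
    Submodule.mem_annihilator.1 (hA.cube_eq_annihilator.le hs) a ha
  have hspan : Submodule.span K (Set.range e) ≤ LinearMap.ker ((mulForm φ).flip a) := by
    rw [Submodule.span_le]
    rintro _ ⟨i, rfl⟩
    exact hea i
  intro b hb
  obtain ⟨p, hp, s, hs, rfl⟩ := Submodule.mem_sup.1 (he hb)
  have hpa : φ (p * a) = 0 := hspan hp
  change φ ((p + s) * a) = 0
  rw [add_mul, hcube hs, add_zero, hpa]

end IsGorensteinOneMNOne

theorem IsGorensteinOneMNOne.exists_isCubicFrame [IsAlgClosed K] [NeZero (2 : K)]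
    (hA : IsGorensteinOneMNOne K A m n) (h : n ≤ m) :
    ∃ (x : Fin m → A) (φ : A →ₗ[K] K), IsCubicFrame n x φ ∧
      ∀ l : Fin n → K, ∑ i, l i • x (Fin.castLE h i) ∈ (Ideal.span (Set.range x) ^ 2).annihilator →
        l = 0 := by
  obtain ⟨φ, hφ1, hφ⟩ := hA.exists_functional
  obtain ⟨e, x, he_sq, hspan, hxM, hφx, hex, hxx, hxspan⟩ := hA.exists_witt_generators hφ h
  have hsurj := surjective_aeval_of_le_span_sup_sq hA.pow_four
    (residueFieldIsK_iff.1 hA.residueFieldIsK) hxspan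
  have hle : Ideal.span (Set.range x) ≤ maximalIdeal A :=
    Ideal.span_le.2 (Set.range_subset_iff.2 hxM)
  have hpow : Ideal.span (Set.range x) ^ 4 = ⊥ :=
    le_bot_iff.1 ((Ideal.pow_right_mono hle 4).trans_eq hA.pow_four)
  have hM := span_range_eq_maximalIdeal hsurj hpow
  refine ⟨x, φ, ⟨hsurj, nondegenerate_mulForm_of_socle hA.pow_four hφ, hφ1, hφx, hxx,
    fun j hj => hM ▸ hA.mem_annihilator_sq hφ hspan (hxM j) fun i => ?_, hpow⟩, fun l hl => ?_⟩
  · rw [hex, if_neg fun hij => (hij ▸ hj).not_gt i.isLt]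
  · funext j
    have hj : φ ((∑ i, l i • x (Fin.castLE h i)) * e j) = 0 := by
      rw [← smul_eq_mul, Submodule.mem_annihilator.1 (hM ▸ hl) _ (he_sq j), map_zero]
    rw [mul_comm, Finset.mul_sum, map_sum] at hj
    simpa [hex] using hj

end WittGenerators

theorem gorenstein_1mn1_iff_normal_form_general
    {K : Type*} [Field K] [IsAlgClosed K] [CharZero K] {m n : ℕ} (hn : 1 ≤ n) (hnm : n ≤ m)
    (A : Type*) [CommRing A] [IsLocalRing A] [Algebra K A] :
    (IsArtinianRing A ∧ residueFieldIsK K A ∧ socDimLoc K A = 1 ∧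
      hilbLoc K A 0 = 1 ∧ hilbLoc K A 1 = m ∧ hilbLoc K A 2 = n ∧ hilbLoc K A 3 = 1 ∧
      IsLocalRing.maximalIdeal A ^ 4 = ⊥) ↔
    ∃ F3 : MvPolynomial (Fin n) K, F3.IsHomogeneous 3 ∧ nondegenerate F3 ∧
      Nonempty (A ≃ₐ[K] (MvPowerSeries (Fin m) K ⧸ annR (normalForm hnm F3))) := by
  simp only [nonempty_algEquiv_quotient_annR_iff]
  rw [← isGorensteinOneMNOne_iff, exists_isMacaulayPresentation_normalForm_iff]
  exact ⟨fun hA => hA.exists_isCubicFrame hnm,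
    fun ⟨_, _, hx, hli⟩ => hx.isGorensteinOneMNOne hnm hli hn⟩

/-- **Structure theorem.**  For `m > n ≥ 1`, a local `K`-algebra `A` is an
Artinian Gorenstein local ring with Hilbert function `{1,m,n,1}` iff
`A ≅ A_F` for `F = F_3 + y_{n+1}^2 + ⋯ + y_m^2 ∈ K[y_1,…,y_m]` with `F_3` a
non-degenerate cubic form in `y_1,…,y_n`. -/
theorem gorenstein_1mn1_iff_normal_form
    {K : Type*} [Field K] [IsAlgClosed K] [CharZero K] {m n : ℕ}
    (hn : 1 ≤ n) (hnm : n < m)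
    (A : Type*) [CommRing A] [IsLocalRing A] [Algebra K A] :
    (IsArtinianRing A ∧ residueFieldIsK K A ∧ socDimLoc K A = 1 ∧
      hilbLoc K A 0 = 1 ∧ hilbLoc K A 1 = m ∧ hilbLoc K A 2 = n ∧ hilbLoc K A 3 = 1 ∧
      IsLocalRing.maximalIdeal A ^ 4 = ⊥) ↔
    (∃ F3 : MvPolynomial (Fin n) K, F3.IsHomogeneous 3 ∧ nondegenerate F3 ∧
      Nonempty (A ≃ₐ[K] (MvPowerSeries (Fin m) K ⧸
        annR (K := K) (n := m) (MvPolynomial.rename (Fin.castLE hnm.le) F3 +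
          ∑ j ∈ Finset.univ.filter (fun j : Fin m => n ≤ (j : ℕ)),
            MvPolynomial.X j ^ 2)))) :=
  gorenstein_1mn1_iff_normal_form_general hn hnm.le A
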